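/- Let K be a number field that is Galois over ℚ and let I be a nonzero ideal of the ring of integers O_K. Then the ideal class of I in the ideal class group of K contains infinitely many ideals whose absolute norm is a prime number; that is, the set of nonzero ideals J of O_K such that J is in the same class as I and the absolute norm of J is prime is infinite. -/

import Mathlib

open scoped nonZeroDivisors

/-!
Summing a smooth function of `t * N(J)` over the ideals `J` of a class is, by the unit theorem, a
sum over a lattice of a smooth compactly supported function on the mixed space. As `t → 0` it equals
`c / t` up to `O(t ^ k)`, with `c` the same for all classes. Taking Mellin transforms, the
`L`-functions of the class group characters continue to the left of `1`, with at most a simple pole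
at `1`, which only the trivial character can have.

The sum of the logarithmic derivatives of these `L`-functions is minus a Dirichlet series with
nonnegative coefficients. If the pole of the trivial character were missing, or if another
`L`-function vanished at `1`, then the product of all the `L`-functions would be regular at `1`, and
Landau's argument would push the Dirichlet series far beyond its region of convergence,
contradicting the lower bound `log n` for its coefficient at `n = N(P) ^ h`, where `h` is the class
number. So by orthogonality the weighted sum of `N(P ^ k) ^ (-σ)` over the prime powers `P ^ k` of a
given class grows like `1 / (σ - 1)` as `σ → 1⁺`. The prime powers whose norm is not prime
contribute a bounded amount, which leaves infinitely many primes of prime norm.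
-/

open MeasureTheory Module Set Filter Topology
open scoped ContDiff

section LatticeSums

variable {V ι : Type*} [NormedAddCommGroup V] [NormedSpace ℝ V] (b : Basis ι ℝ V)

theorem convex_fundamentalDomain : Convex ℝ (ZSpan.fundamentalDomain b) := by
  have h : ZSpan.fundamentalDomain b = ⋂ i, (b.coord i) ⁻¹' Ico 0 1 := by
    ext x
    simp [ZSpan.mem_fundamentalDomain]
  rw [h]
  exact convex_iInter fun i => (convex_Ico 0 1).linear_preimage (b.coord i)

theorem zero_mem_fundamentalDomain : (0 : V) ∈ ZSpan.fundamentalDomain b := by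
  simp [ZSpan.mem_fundamentalDomain]

variable [Finite ι] [FiniteDimensional ℝ V]

theorem exists_finset_card_le_forall_norm_le_mem (ρ R : ℝ) :
    ∃ c : ℝ, 0 < c ∧ ∀ t ∈ Ioc (0 : ℝ) 1, ∃ S : Finset (Submodule.span ℤ (range b)),
      (S.card : ℝ) ≤ (c / t) ^ finrank ℝ V ∧
        ∀ x : V, ‖x‖ ≤ ρ → ∀ l : Submodule.span ℤ (range b), ‖t • (x + (l : V))‖ ≤ R → l ∈ S := by
  classical
  have := Fintype.ofFinite ι
  let B := b.restrictScalars ℤ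
  set c₀ := (ZLattice.normBound B)⁻¹
  have hc₀ : 0 < c₀ := inv_pos.2 (ZLattice.normBound_pos B)
  refine ⟨2 * (c₀ * (|R| + |ρ|)) + 3, by positivity, fun t ⟨ht₀, ht₁⟩ => ?_⟩
  set n : ℕ := ⌈c₀ * ((|R| + |ρ|) / t)⌉₊
  refine ⟨(Fintype.piFinset fun _ => Finset.Icc (-n : ℤ) n).map
    B.equivFun.symm.toEquiv.toEmbedding, ?_, fun x hx l hl => ?_⟩
  · have hn : (n : ℝ) ≤ c₀ * ((|R| + |ρ|) / t) + 1 := (Nat.ceil_lt_add_one (by positivity)).le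
    have ht : 1 ≤ 1 / t := by rwa [le_div_iff₀ ht₀, one_mul]
    have hside : 2 * (n : ℝ) + 1 ≤ (2 * (c₀ * (|R| + |ρ|)) + 3) / t := by
      calc 2 * (n : ℝ) + 1 ≤ 2 * (c₀ * ((|R| + |ρ|) / t)) + 3 * (1 / t) := by linarith
        _ = (2 * (c₀ * (|R| + |ρ|)) + 3) / t := by ring
    have hIcc : ((n : ℤ) + 1 - -n).toNat = 2 * n + 1 := by lia
    simp only [Finset.card_map, Fintype.card_piFinset, Finset.prod_const, Finset.card_univ,
      Int.card_Icc, hIcc, finrank_eq_card_basis b]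
    push_cast
    gcongr
  · have hnorm : ‖(l : V)‖ ≤ (|R| + |ρ|) / t := by
      have hxl : ‖x + (l : V)‖ ≤ |R| / t := by
        rw [norm_smul, Real.norm_of_nonneg ht₀.le] at hl
        rw [le_div_iff₀' ht₀]
        exact hl.trans (le_abs_self R)
      have hρ : |ρ| ≤ |ρ| / t := le_div_self (abs_nonneg ρ) ht₀ ht₁
      calc ‖(l : V)‖ = ‖(x + (l : V)) - x‖ := by rw [add_sub_cancel_left]
        _ ≤ |R| / t + |ρ| / t :=
          (norm_sub_le _ _).trans (add_le_add hxl ((hx.trans (le_abs_self ρ)).trans hρ))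
        _ = (|R| + |ρ|) / t := by ring
    rw [Finset.mem_map]
    refine ⟨B.equivFun l, Fintype.mem_piFinset.2 fun i => ?_, by simp⟩
    have hcoord : ((|B.repr l i| : ℤ) : ℝ) ≤ (n : ℝ) :=
      (ZLattice.abs_repr_le B l i).trans
        ((mul_le_mul_of_nonneg_left hnorm hc₀.le).trans (Nat.le_ceil _))
    rw [Finset.mem_Icc, ← abs_le]
    exact_mod_cast hcoord

theorem exists_finset_card_le_forall_eq_zero {H : V → ℝ} (hc : HasCompactSupport H) (ρ : ℝ) :
    ∃ c : ℝ, 0 < c ∧ ∀ t ∈ Ioc (0 : ℝ) 1, ∃ S : Finset (Submodule.span ℤ (range b)),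
      (S.card : ℝ) ≤ (c / t) ^ finrank ℝ V ∧
        ∀ x : V, ‖x‖ ≤ ρ → ∀ l ∉ S, H (t • (x + (l : V))) = 0 := by
  obtain ⟨R, hR⟩ := hc.isCompact.isBounded.exists_norm_le
  obtain ⟨c, hc₀, hS⟩ := exists_finset_card_le_forall_norm_le_mem b ρ R
  refine ⟨c, hc₀, fun t ht => ?_⟩
  obtain ⟨S, hcard, hmem⟩ := hS t ht
  exact ⟨S, hcard, fun x hx l hl =>
    image_eq_zero_of_notMem_tsupport fun h => hl (hmem x hx l (hR _ h))⟩

theorem summable_comp_smul_add {H : V → ℝ} (hc : HasCompactSupport H) {t : ℝ}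
    (ht : t ∈ Ioc (0 : ℝ) 1) (x : V) :
    Summable fun l : Submodule.span ℤ (range b) => H (t • (x + (l : V))) := by
  obtain ⟨_, -, hS⟩ := exists_finset_card_le_forall_eq_zero b hc ‖x‖
  obtain ⟨S, -, hzero⟩ := hS t ht
  exact summable_of_ne_finset_zero (s := S) (hzero x le_rfl)

variable [MeasurableSpace V] (μ : Measure V)

/-- The Riemann sum of `H` over the translate by `x` of the lattice spanned by `b`, scaled by `t`
and normalised by the covolume, so that it approximates `∫ H` as `t → 0`. -/
noncomputable def latticeRiemannSum (H : V → ℝ) (t : ℝ) (x : V) : ℝ :=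
  μ.real (ZSpan.fundamentalDomain b) *
    (t ^ finrank ℝ V * ∑' l : Submodule.span ℤ (range b), H (t • (x + (l : V))))

theorem exists_abs_latticeRiemannSum_le {H : V → ℝ} (hH : Continuous H)
    (hc : HasCompactSupport H) (ρ : ℝ) :
    ∃ C : ℝ, ∀ t ∈ Ioc (0 : ℝ) 1, ∀ x : V, ‖x‖ ≤ ρ → |latticeRiemannSum b μ H t x| ≤ C := by
  obtain ⟨c, hc₀, hS⟩ := exists_finset_card_le_forall_eq_zero b hc ρ
  obtain ⟨A, hA⟩ := hH.bounded_above_of_compact_support hc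
  have hA₀ : 0 ≤ A := (norm_nonneg _).trans (hA 0)
  refine ⟨μ.real (ZSpan.fundamentalDomain b) * (c ^ finrank ℝ V * A), fun t ht x hx => ?_⟩
  obtain ⟨S, hcard, hzero⟩ := hS t ht
  have ht₀ : 0 < t := ht.1
  have hsum : |∑ l ∈ S, H (t • (x + (l : V)))| ≤ (c / t) ^ finrank ℝ V * A :=
    calc |∑ l ∈ S, H (t • (x + (l : V)))| ≤ ∑ l ∈ S, |H (t • (x + (l : V)))| :=
          Finset.abs_sum_le_sum_abs _ _
      _ ≤ S.card * A := by
          simpa using Finset.sum_le_card_nsmul S _ A fun l _ => hA (t • (x + (l : V)))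
      _ ≤ (c / t) ^ finrank ℝ V * A := by gcongr
  rw [latticeRiemannSum, tsum_eq_sum (hzero x hx), abs_mul, abs_mul,
    abs_of_nonneg measureReal_nonneg, abs_of_pos (pow_pos ht₀ _)]
  refine mul_le_mul_of_nonneg_left ?_ measureReal_nonneg
  calc t ^ finrank ℝ V * |∑ l ∈ S, H (t • (x + (l : V)))|
      ≤ t ^ finrank ℝ V * ((c / t) ^ finrank ℝ V * A) := by gcongr
    _ = c ^ finrank ℝ V * A := by rw [div_pow]; field_simp

theorem hasFDerivAt_latticeRiemannSum {H : V → ℝ} (hH : ContDiff ℝ 1 H)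
    (hc : HasCompactSupport H) {t : ℝ} (ht : t ∈ Ioc (0 : ℝ) 1) (x : V) :
    ∃ L : V →L[ℝ] ℝ, HasFDerivAt (latticeRiemannSum b μ H t) L x ∧
      ∀ v, L v = t * latticeRiemannSum b μ (fun y => fderiv ℝ H y v) t x := by
  obtain ⟨R, hR⟩ := hc.isCompact.isBounded.exists_norm_le
  obtain ⟨_, -, hS⟩ := exists_finset_card_le_forall_norm_le_mem b (‖x‖ + 1) R
  obtain ⟨S, -, hmem⟩ := hS t ht
  have hnot : ∀ y : V, ‖y‖ ≤ ‖x‖ + 1 → ∀ l ∉ S, t • (y + (l : V)) ∉ tsupport H :=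
    fun y hy l hl h => hl (hmem y hy l (hR _ h))
  have hterm (l : Submodule.span ℤ (range b)) : HasFDerivAt (fun y => H (t • (y + (l : V))))
      (t • fderiv ℝ H (t • (x + (l : V)))) x := by
    have hin : HasFDerivAt (fun y : V => t • (y + (l : V))) (t • ContinuousLinearMap.id ℝ V) x :=
      ((hasFDerivAt_id x).add_const _).const_smul t
    exact ((hH.differentiable one_ne_zero _).hasFDerivAt.comp x hin).congr_fderiv
      (by rw [ContinuousLinearMap.comp_smul, ContinuousLinearMap.comp_id])
  have hfin : latticeRiemannSum b μ H t =ᶠ[𝓝 x] fun y => μ.real (ZSpan.fundamentalDomain b) *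
      (t ^ finrank ℝ V * ∑ l ∈ S, H (t • (y + (l : V)))) := by
    filter_upwards [continuous_norm.continuousAt.eventually (gt_mem_nhds (lt_add_one ‖x‖))]
      with y hy
    rw [latticeRiemannSum, tsum_eq_sum fun l hl =>
      image_eq_zero_of_notMem_tsupport (hnot y hy.le l hl)]
  refine ⟨_, (((HasFDerivAt.fun_sum fun l _ => hterm l).const_mul _).const_mul
    _).congr_of_eventuallyEq hfin, fun v => ?_⟩
  have hzero : ∀ l ∉ S, fderiv ℝ H (t • (x + (l : V))) v = 0 := fun l hl => by
    rw [image_eq_zero_of_notMem_tsupport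
      fun h => hnot x (by simp) l hl (tsupport_fderiv_subset ℝ h), zero_apply]
  rw [latticeRiemannSum, tsum_eq_sum hzero]
  simp only [smul_apply, sum_apply, smul_eq_mul,
    ← Finset.mul_sum]
  ring

variable [BorelSpace V] [μ.IsAddHaarMeasure]

theorem integral_fderiv_eq_zero {H : V → ℝ} (hH : ContDiff ℝ 1 H) (hc : HasCompactSupport H)
    (v : V) : ∫ x, fderiv ℝ H x v ∂μ = 0 := by
  have hint : Integrable (fun x => fderiv ℝ H x v) μ :=
    ((hH.continuous_fderiv one_ne_zero).clm_apply continuous_const).integrable_of_hasCompactSupport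
      (hc.fderiv_apply ℝ v)
  simpa using integral_bilinear_fderiv_right_eq_neg_left_of_integrable (μ := μ)
    (f := fun _ : V => (1 : ℝ)) (g := H) (v := v) (B := ContinuousLinearMap.mul ℝ ℝ)
    (by simp) (by simpa using hint)
    (by simpa using hH.continuous.integrable_of_hasCompactSupport hc)
    (by fun_prop) (fun x _ => hH.differentiable one_ne_zero x)

theorem setIntegral_latticeRiemannSum {H : V → ℝ} (hH : Continuous H) (hc : HasCompactSupport H)
    {t : ℝ} (ht : t ∈ Ioc (0 : ℝ) 1) :
    ∫ x in ZSpan.fundamentalDomain b, latticeRiemannSum b μ H t x ∂μ =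
      μ.real (ZSpan.fundamentalDomain b) * ∫ x, H x ∂μ := by
  set D := ZSpan.fundamentalDomain b
  obtain ⟨M, hM⟩ := (ZSpan.fundamentalDomain_isBounded b).exists_norm_le
  obtain ⟨_, -, hS⟩ := exists_finset_card_le_forall_eq_zero b hc M
  obtain ⟨S, -, hzero⟩ := hS t ht
  have hD : MeasurableSet D := ZSpan.fundamentalDomain_measurableSet b
  have hint (l : Submodule.span ℤ (range b)) :
      IntegrableOn (fun y => H (t • (y + (l : V)))) D μ := by
    have hcont : Continuous fun y => H (t • (y + (l : V))) := by fun_prop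
    exact (hcont.continuousOn.integrableOn_compact
      (ZSpan.fundamentalDomain_isBounded b).isCompact_closure).mono_set subset_closure
  have htsum : ∫ x in D, ∑' l : Submodule.span ℤ (range b), H (t • (x + (l : V))) ∂μ =
      ∫ x, H (t • x) ∂μ := by
    have : Countable (Submodule.span ℤ (range b)).toAddSubgroup :=
      inferInstanceAs (Countable (Submodule.span ℤ (range b)))
    have hunfold : ∫ x, H (t • x) ∂μ = ∑' l : Submodule.span ℤ (range b),
        ∫ x in D, H (t • (l +ᵥ x)) ∂μ :=
      (ZSpan.isAddFundamentalDomain' b μ).integral_eq_tsum'' _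
        ((hH.integrable_of_hasCompactSupport hc).comp_smul ht.1.ne')
    simp only [Submodule.vadd_def, vadd_eq_add, add_comm _ (_ : V)] at hunfold
    rw [hunfold, tsum_eq_sum fun l hl => setIntegral_eq_zero_of_forall_eq_zero
      fun x hx => hzero x (hM x hx) l hl, ← integral_finsetSum _ fun l _ => hint l]
    exact setIntegral_congr_fun hD fun x hx => tsum_eq_sum (hzero x (hM x hx))
  simp only [latticeRiemannSum]
  rw [integral_const_mul, integral_const_mul, htsum,
    Measure.integral_comp_smul_of_nonneg μ _ _ (hR := ht.1.le), smul_eq_mul,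
    mul_inv_cancel_left₀ (pow_ne_zero _ ht.1.ne')]

theorem abs_sub_le_of_setIntegral_eq_of_norm_hasFDerivAt_le {q : V → ℝ} {L : V → V →L[ℝ] ℝ}
    {D : Set V} {K M m : ℝ} (hD : Convex ℝ D) (hDm : 0 < μ.real D) (hM : ∀ x ∈ D, ‖x‖ ≤ M)
    (hq : ∀ x, HasFDerivAt q (L x) x) (hL : ∀ x ∈ D, ‖L x‖ ≤ K)
    (hmean : ∫ x in D, q x ∂μ = μ.real D * m) {x : V} (hx : x ∈ D) :
    |q x - m| ≤ K * (2 * M) := by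
  have hDb : Bornology.IsBounded D := isBounded_iff_forall_norm_le.2 ⟨M, hM⟩
  have hfin : μ D < ⊤ := hDb.measure_lt_top
  have hK : 0 ≤ K := (norm_nonneg _).trans (hL x hx)
  have hlip : ∀ y ∈ D, ‖q x - q y‖ ≤ K * (2 * M) := fun y hy => by
    refine (hD.norm_image_sub_le_of_norm_hasFDerivWithin_le
      (fun z _ => (hq z).hasFDerivWithinAt) hL hy hx).trans ?_
    gcongr
    linarith [norm_sub_le x y, hM x hx, hM y hy]
  have hint : IntegrableOn q D μ :=
    ((continuous_iff_continuousAt.2 fun y => (hq y).continuousAt).continuousOn.integrableOn_compact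
      hDb.isCompact_closure).mono_set subset_closure
  have hconst : IntegrableOn (fun _ => q x) D μ := integrableOn_const hfin.ne (by simp)
  have hdiff : μ.real D * (q x - m) = ∫ y in D, (q x - q y) ∂μ := by
    rw [integral_sub hconst hint, hmean, setIntegral_const,
      smul_eq_mul, mul_sub]
  have hle := norm_setIntegral_le_of_norm_le_const hfin hlip
  rw [← hdiff, norm_mul, Real.norm_of_nonneg hDm.le, mul_comm, Real.norm_eq_abs] at hle
  exact le_of_mul_le_mul_right hle hDm

/- The mean of the Riemann sum over the fundamental domain is exactly the integral, and each
derivative in `x` gains a factor `t`, so the oscillation about the mean gains one too. -/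
theorem exists_abs_latticeRiemannSum_sub_integral_le (k : ℕ) {H : V → ℝ} (hH : ContDiff ℝ ∞ H)
    (hc : HasCompactSupport H) :
    ∃ C : ℝ, ∀ t ∈ Ioc (0 : ℝ) 1, ∀ x ∈ ZSpan.fundamentalDomain b,
      |latticeRiemannSum b μ H t x - ∫ y, H y ∂μ| ≤ C * t ^ k := by
  have := Fintype.ofFinite ι
  obtain ⟨M, hM⟩ := (ZSpan.fundamentalDomain_isBounded b).exists_norm_le
  induction k generalizing H with
  | zero =>
    obtain ⟨C, hC⟩ := exists_abs_latticeRiemannSum_le b μ hH.continuous hc M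
    refine ⟨C + |∫ y, H y ∂μ|, fun t ht x hx => ?_⟩
    rw [pow_zero, mul_one]
    exact (abs_sub _ _).trans (by gcongr; exact hC t ht x (hM x hx))
  | succ k ih =>
    obtain ⟨A, -, hA⟩ := b.exists_opNorm_le (F := ℝ)
    have hpartial (i : ι) : ContDiff ℝ ∞ fun x => fderiv ℝ H x (b i) :=
      (hH.fderiv_right (m := ∞) (by simp)).clm_apply contDiff_const
    choose C hC using fun i => ih (hpartial i) (hc.fderiv_apply ℝ (b i))
    have hH₁ : ContDiff ℝ 1 H := hH.of_le (by simp)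
    have hDm : 0 < μ.real (ZSpan.fundamentalDomain b) :=
      ENNReal.toReal_pos (ZSpan.measure_fundamentalDomain_ne_zero b)
        (ZSpan.fundamentalDomain_isBounded b).measure_lt_top.ne
    refine ⟨A * (∑ i, |C i|) * (2 * M), fun t ht x hx => ?_⟩
    have ht₀ : 0 < t := ht.1
    choose L hL hLv using hasFDerivAt_latticeRiemannSum b μ hH₁ hc ht
    have hLnorm : ∀ y ∈ ZSpan.fundamentalDomain b, ‖L y‖ ≤ A * ((∑ i, |C i|) * t ^ (k + 1)) := by
      refine fun y hy => hA (by positivity) fun i => ?_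
      have hi := hC i t ht y hy
      rw [integral_fderiv_eq_zero μ hH₁ hc, sub_zero] at hi
      calc ‖L y (b i)‖ = t * |latticeRiemannSum b μ (fun y => fderiv ℝ H y (b i)) t y| := by
            rw [hLv, norm_mul, Real.norm_of_nonneg ht₀.le, Real.norm_eq_abs]
        _ ≤ t * (C i * t ^ k) := by gcongr
        _ ≤ t * ((∑ i, |C i|) * t ^ k) := by
            gcongr
            exact (le_abs_self _).trans
              (Finset.single_le_sum (fun i _ => abs_nonneg (C i)) (Finset.mem_univ i))
        _ = (∑ i, |C i|) * t ^ (k + 1) := by ring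
    refine (abs_sub_le_of_setIntegral_eq_of_norm_hasFDerivAt_le μ (convex_fundamentalDomain b) hDm
      hM hL hLnorm (setIntegral_latticeRiemannSum b μ hH.continuous hc ht) hx).trans_eq (by ring)

end LatticeSums

section TestFunction

open NumberField NumberField.Units NumberField.Units.dirichletUnitTheorem
open NumberField.mixedEmbedding hiding norm

/-- A smooth bump on `[-1, 1]` whose integer translates form a partition of unity of `ℝ`. -/
noncomputable def smoothHat (x : ℝ) : ℝ := Real.smoothTransition (x + 1) - Real.smoothTransition x

theorem contDiff_smoothHat : ContDiff ℝ ∞ smoothHat := by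
  have h : ContDiff ℝ ∞ Real.smoothTransition := Real.smoothTransition.contDiff
  exact (h.comp (contDiff_id.add contDiff_const)).sub h

theorem smoothHat_eq_zero {x : ℝ} (hx : 1 ≤ |x|) : smoothHat x = 0 := by
  rcases le_abs.1 hx with h | h
  · rw [smoothHat, Real.smoothTransition.one_of_one_le h,
      Real.smoothTransition.one_of_one_le (by linarith), sub_self]
  · rw [smoothHat, Real.smoothTransition.zero_of_nonpos (by linarith),
      Real.smoothTransition.zero_of_nonpos (by linarith), sub_self]

theorem smoothHat_add_intCast_eq_zero {a : ℝ} {m : ℤ}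
    (hm : m ∉ ({-⌊a⌋, -⌊a⌋ - 1} : Finset ℤ)) : smoothHat (a + m) = 0 := by
  have hle := Int.floor_le a
  have hlt := Int.lt_floor_add_one a
  simp only [Finset.mem_insert, Finset.mem_singleton, not_or] at hm
  refine smoothHat_eq_zero (le_abs.2 ?_)
  rcases lt_or_gt_of_ne hm.1 with h | h
  · have : (m : ℝ) ≤ -⌊a⌋ - 2 := by exact_mod_cast (by lia : m ≤ -⌊a⌋ - 2)
    right; linarith
  · have : -(⌊a⌋ : ℝ) + 1 ≤ m := by exact_mod_cast (by lia : -⌊a⌋ + 1 ≤ m)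
    left; linarith

theorem sum_smoothHat_add_intCast (a : ℝ) :
    ∑ m ∈ ({-⌊a⌋, -⌊a⌋ - 1} : Finset ℤ), smoothHat (a + m) = 1 := by
  have hle := Int.floor_le a
  have hlt := Int.lt_floor_add_one a
  rw [Finset.sum_pair (by lia)]
  simp only [smoothHat, Int.cast_neg, Int.cast_sub, Int.cast_one]
  rw [Real.smoothTransition.one_of_one_le (show 1 ≤ a + -(⌊a⌋ : ℝ) + 1 by linarith),
    Real.smoothTransition.zero_of_nonpos (show a + (-(⌊a⌋ : ℝ) - 1) ≤ 0 by linarith),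
    show a + (-(⌊a⌋ : ℝ) - 1) + 1 = a + -⌊a⌋ by ring]
  ring

theorem hasSum_prod_snd {τ κ : Type*} [Finite τ] {f : κ → ℝ} {s : ℝ} (hf : HasSum f s) :
    HasSum (fun p : τ × κ => f p.2) (Nat.card τ * s) := by
  have := Fintype.ofFinite τ
  have hcard : HasSum (fun _ : τ => (1 : ℝ)) (Nat.card τ) := by
    simpa using hasSum_fintype fun _ : τ => (1 : ℝ)
  simpa using hcard.mul hf (summable_mul_of_summable_norm hcard.summable.norm hf.summable.norm)

theorem hasSum_prod_smoothHat_add_intCast {ι : Type*} [Fintype ι] (a : ι → ℝ) :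
    HasSum (fun m : ι → ℤ => ∏ i, smoothHat (a i + m i)) 1 := by
  classical
  let s : ι → Finset ℤ := fun i => {-⌊a i⌋, -⌊a i⌋ - 1}
  have hs : ∑ m ∈ Fintype.piFinset s, ∏ i, smoothHat (a i + m i) = 1 := by
    rw [← Finset.prod_univ_sum s fun i m => smoothHat (a i + (m : ℤ))]
    exact Finset.prod_eq_one fun i _ => sum_smoothHat_add_intCast (a i)
  rw [← hs]
  refine hasSum_sum_of_ne_finset_zero fun m hm => ?_
  simp only [Fintype.mem_piFinset, not_forall] at hm
  obtain ⟨i, hi⟩ := hm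
  exact Finset.prod_eq_zero (Finset.mem_univ i) (smoothHat_add_intCast_eq_zero hi)

variable {K : Type*} [Field K] [NumberField K]

open scoped Classical in
theorem contDiffAt_normAtPlace {w : InfinitePlace K} {x : mixedSpace K}
    (hx : normAtPlace w x ≠ 0) : ContDiffAt ℝ ∞ (fun y => normAtPlace w y) x := by
  rcases w.isReal_or_isComplex with hw | hw
  · simp only [normAtPlace_apply_of_isReal hw] at hx ⊢
    have : ContDiffAt ℝ ∞ (fun y : mixedSpace K => y.1 ⟨w, hw⟩) x := by fun_prop
    exact this.norm ℝ (norm_ne_zero_iff.1 hx)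
  · simp only [normAtPlace_apply_of_isComplex hw] at hx ⊢
    have : ContDiffAt ℝ ∞ (fun y : mixedSpace K => y.2 ⟨w, hw⟩) x := by fun_prop
    exact this.norm ℝ (norm_ne_zero_iff.1 hx)

open scoped Classical in
theorem contDiffAt_mixedEmbedding_norm {x : mixedSpace K} (hx : mixedEmbedding.norm x ≠ 0) :
    ContDiffAt ℝ ∞ (fun y : mixedSpace K => mixedEmbedding.norm y) x := by
  simp only [mixedEmbedding.norm_apply]
  exact contDiffAt_prod fun w _ =>
    (contDiffAt_normAtPlace (mixedEmbedding.norm_ne_zero_iff.1 hx w)).pow _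

open scoped Classical in
theorem contDiffAt_logMap {x : mixedSpace K} (hx : mixedEmbedding.norm x ≠ 0) :
    ContDiffAt ℝ ∞ (fun y : mixedSpace K => logMap y) x := by
  have hw := mixedEmbedding.norm_ne_zero_iff.1 hx
  refine contDiffAt_pi.2 fun w => ?_
  simp only [logMap_apply]
  exact contDiffAt_const.mul (((contDiffAt_normAtPlace (hw w.1)).log (hw w.1)).sub
    (((contDiffAt_mixedEmbedding_norm hx).log hx).mul contDiffAt_const))

variable (K) in
open scoped Classical in
/-- The basis of the logarithmic space formed by the logarithms of a system of fundamental units. -/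
noncomputable def logUnitBasis : Basis (Fin (rank K)) ℝ (logSpace K) :=
  (basisUnitLattice K).ofZLatticeBasis ℝ _

/-- The test function `x ↦ g (N x)` on the mixed space, cut off smoothly in the directions of the
fundamental units in such a way that summing over a unit orbit gives back a multiple of
`g (N x)`. -/
noncomputable def unitCutoff (g : ℝ → ℝ) (x : mixedSpace K) : ℝ :=
  g (mixedEmbedding.norm x) * ∏ i, smoothHat ((logUnitBasis K).repr (logMap x) i)

variable {g : ℝ → ℝ}

open scoped Classical in
theorem contDiff_unitCutoff (hg : ContDiff ℝ ∞ g) (hpos : tsupport g ⊆ Ioi 0) :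
    ContDiff ℝ ∞ (unitCutoff (K := K) g) := by
  refine contDiff_iff_contDiffAt.2 fun x => ?_
  by_cases hx : mixedEmbedding.norm x = 0
  · have hzero : g =ᶠ[𝓝 (mixedEmbedding.norm x)] 0 :=
      notMem_tsupport_iff_eventuallyEq.1 fun h => (hpos h).ne' hx
    refine contDiffAt_const (c := 0) |>.congr_of_eventuallyEq ?_
    filter_upwards [(mixedEmbedding.continuous_norm K).continuousAt.eventually hzero] with y hy
    rw [unitCutoff, hy, Pi.zero_apply, zero_mul]
  · refine (hg.contDiffAt.comp x (contDiffAt_mixedEmbedding_norm hx)).mul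
      (contDiffAt_prod fun i _ => contDiff_smoothHat.contDiffAt.comp x ?_)
    exact (LinearMap.toContinuousLinearMap ((logUnitBasis K).coord i)).contDiff.contDiffAt.comp x
      (contDiffAt_logMap hx)

open scoped Classical in
theorem abs_log_normAtPlace_le {x : mixedSpace K} {w : InfinitePlace K} (hw : w ≠ w₀) {Q R : ℝ}
    (hQ : |Real.log (mixedEmbedding.norm x)| ≤ Q) (hR : ‖logMap x‖ ≤ R) :
    |Real.log (normAtPlace w x)| ≤ R + Q := by
  set d : ℝ := (finrank ℚ K : ℝ)⁻¹
  have hd : d ≤ 1 := inv_le_one_of_one_le₀ (by exact_mod_cast finrank_pos (R := ℚ) (M := K))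
  have hd₀ : 0 ≤ d := by positivity
  have hw : ‖logMap x ⟨w, hw⟩‖ ≤ R := (norm_le_pi_norm (logMap x) ⟨w, hw⟩).trans hR
  rw [logMap_apply, norm_mul, Real.norm_natCast, Real.norm_eq_abs] at hw
  have hlog : |Real.log (normAtPlace w x) - Real.log (mixedEmbedding.norm x) * d| ≤ R :=
    (le_mul_of_one_le_left (abs_nonneg _) (by exact_mod_cast w.one_le_mult)).trans hw
  have hlogd : |Real.log (mixedEmbedding.norm x) * d| ≤ Q := by
    rw [abs_mul, abs_of_nonneg hd₀]
    exact (mul_le_of_le_one_right (abs_nonneg _) hd).trans hQ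
  calc |Real.log (normAtPlace w x)|
      = |(Real.log (normAtPlace w x) - Real.log (mixedEmbedding.norm x) * d) +
          Real.log (mixedEmbedding.norm x) * d| := by rw [sub_add_cancel]
    _ ≤ R + Q := (abs_add_le _ _).trans (add_le_add hlog hlogd)

open scoped Classical in
theorem log_normAtPlace_le {x : mixedSpace K} (hx : mixedEmbedding.norm x ≠ 0) {Q R : ℝ}
    (hQ : |Real.log (mixedEmbedding.norm x)| ≤ Q) (hR : ‖logMap x‖ ≤ R) (w : InfinitePlace K) :
    Real.log (normAtPlace w x) ≤ Q + finrank ℚ K * (R + Q) := by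
  have hQ₀ : 0 ≤ Q := (abs_nonneg _).trans hQ
  have hR₀ : 0 ≤ R := (norm_nonneg _).trans hR
  have hd : (1 : ℝ) ≤ finrank ℚ K := by exact_mod_cast finrank_pos (R := ℚ) (M := K)
  by_cases hw : w = w₀
  swap
  · nlinarith [(abs_le.1 (abs_log_normAtPlace_le hw hQ hR)).2]
  subst hw
  have hlog : Real.log (mixedEmbedding.norm x) =
      ∑ w : InfinitePlace K, (w.mult : ℝ) * Real.log (normAtPlace w x) := by
    rw [mixedEmbedding.norm_apply, Real.log_prod fun w _ =>
      pow_ne_zero _ (mixedEmbedding.norm_ne_zero_iff.1 hx w)]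
    simp only [Real.log_pow]
  rw [← Finset.add_sum_erase _ _ (Finset.mem_univ (w₀ : InfinitePlace K))] at hlog
  have hothers : -∑ w ∈ Finset.univ.erase (w₀ : InfinitePlace K),
      (w.mult : ℝ) * Real.log (normAtPlace w x) ≤ finrank ℚ K * (R + Q) := by
    rw [← InfinitePlace.sum_mult_eq (K := K), Nat.cast_sum, Finset.sum_mul,
      ← Finset.sum_neg_distrib]
    refine (Finset.sum_le_sum fun w hw => ?_).trans
      (Finset.sum_le_sum_of_subset_of_nonneg (Finset.subset_univ _) fun w _ _ => by positivity)
    rw [← mul_neg]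
    gcongr
    exact (neg_le_abs _).trans (abs_log_normAtPlace_le (Finset.ne_of_mem_erase hw) hQ hR)
  have hmult : (1 : ℝ) ≤ (w₀ : InfinitePlace K).mult := by exact_mod_cast InfinitePlace.one_le_mult
  by_cases hneg : Real.log (normAtPlace (w₀ : InfinitePlace K) x) ≤ 0
  · exact hneg.trans (by positivity)
  · nlinarith [(abs_le.1 hQ).2]

open scoped Classical in
theorem hasCompactSupport_unitCutoff (hg : HasCompactSupport g) (hpos : tsupport g ⊆ Ioi 0) :
    HasCompactSupport (unitCutoff (K := K) g) := by
  obtain ⟨Q, hQ⟩ := hg.isCompact.exists_bound_of_continuousOn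
    (Real.continuousOn_log.mono fun v hv => (hpos hv).ne')
  refine HasCompactSupport.of_support_subset_isCompact (isCompact_closedBall 0
    (Real.exp (Q + finrank ℚ K * (∑ i, ‖logUnitBasis K i‖ + Q)))) fun x hx => ?_
  have hgx := subset_tsupport g (left_ne_zero_of_mul hx)
  have hhat := Finset.prod_ne_zero_iff.1 (right_ne_zero_of_mul hx)
  have hnorm : mixedEmbedding.norm x ≠ 0 := (hpos hgx).ne'
  have hR : ‖logMap x‖ ≤ ∑ i, ‖logUnitBasis K i‖ := by
    rw [← (logUnitBasis K).sum_repr (logMap x)]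
    refine (norm_sum_le _ _).trans (Finset.sum_le_sum fun i _ => ?_)
    rw [_root_.norm_smul]
    refine mul_le_of_le_one_left (norm_nonneg _) ?_
    by_contra! h
    exact hhat i (Finset.mem_univ _) (smoothHat_eq_zero h.le)
  rw [mem_closedBall_zero_iff, norm_eq_sup'_normAtPlace]
  refine Finset.sup'_le _ _ fun w _ => ?_
  have hw : 0 < normAtPlace w x :=
    (normAtPlace_nonneg _ _).lt_of_ne' (mixedEmbedding.norm_ne_zero_iff.1 hnorm w)
  exact (Real.log_le_iff_le_exp hw).1 (log_normAtPlace_le hnorm (hQ _ hgx) hR w)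

open scoped Classical in
theorem logEmbedding_torsion_mul_prod_fundSystem (ζ : torsion K) (m : Fin (rank K) → ℤ) :
    logEmbedding K (Additive.ofMul (ζ * ∏ i, fundSystem K i ^ m i)) =
      ∑ i, (m i : ℝ) • logUnitBasis K i := by
  rw [ofMul_mul, map_add, logEmbedding_eq_zero_iff.2 ζ.2, zero_add, ofMul_prod, map_sum]
  refine Finset.sum_congr rfl fun i _ => ?_
  rw [ofMul_zpow, map_zsmul, logEmbedding_fundSystem, logUnitBasis, Basis.ofZLatticeBasis_apply,
    Int.cast_smul_eq_zsmul]

theorem unitCutoff_torsion_mul_prod_fundSystem_smul {x : mixedSpace K}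
    (hx : mixedEmbedding.norm x ≠ 0) (ζ : torsion K) (m : Fin (rank K) → ℤ) :
    unitCutoff g (((ζ : (𝓞 K)ˣ) * ∏ i, fundSystem K i ^ m i) • x) =
      g (mixedEmbedding.norm x) *
        ∏ i, smoothHat ((logUnitBasis K).repr (logMap x) i + m i) := by
  rw [unitCutoff, norm_unit_smul, logMap_unit_smul _ hx, logEmbedding_torsion_mul_prod_fundSystem,
    map_add]
  simp only [Finsupp.add_apply, Basis.repr_sum_self, add_comm]

variable (K) in
/-- Dirichlet's unit theorem: units are products of a root of unity and a product of powers of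
fundamental units. -/
noncomputable def unitEquiv : torsion K × (Fin (rank K) → ℤ) ≃ (𝓞 K)ˣ :=
  Equiv.ofBijective (fun p => p.1 * ∏ i, fundSystem K i ^ p.2 i) <|
    (Function.bijective_iff_existsUnique _).2 fun u => by
      obtain ⟨p, hp, huniq⟩ := exist_unique_eq_mul_prod K u
      exact ⟨p, hp.symm, fun q hq => huniq q hq.symm⟩

theorem hasSum_unitCutoff_smul {x : mixedSpace K} (hx : mixedEmbedding.norm x ≠ 0) :
    HasSum (fun u : (𝓞 K)ˣ => unitCutoff g (u • x))
      (torsionOrder K * g (mixedEmbedding.norm x)) := by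
  have hhat := (hasSum_prod_smoothHat_add_intCast
    fun i => (logUnitBasis K).repr (logMap x) i).mul_left (g (mixedEmbedding.norm x))
  rw [mul_one] at hhat
  rw [← (unitEquiv K).hasSum_iff]
  exact (hasSum_prod_snd hhat).congr_fun fun p =>
    unitCutoff_torsion_mul_prod_fundSystem_smul hx p.1 p.2

end TestFunction

section ClassCount

open NumberField NumberField.Units Submodule
open NumberField.mixedEmbedding hiding norm norm_smul

theorem exists_mk0_eq_inv_span_singleton_eq_mul {R : Type*} [CommRing R] [IsDedekindDomain R]
    {b : (Ideal R)⁰} {a : R} (ha : a ∈ (b : Ideal R)) (ha₀ : a ≠ 0) :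
    ∃ J : (Ideal R)⁰, ClassGroup.mk0 J = (ClassGroup.mk0 b)⁻¹ ∧
      Ideal.span {a} = (J : Ideal R) * b := by
  obtain ⟨J, hJ⟩ := Ideal.dvd_span_singleton.2 ha
  have ha' : Ideal.span {a} ≠ 0 := Ideal.span_singleton_eq_bot.not.2 ha₀
  have hJ₀ : J ∈ (Ideal R)⁰ := mem_nonZeroDivisors_of_ne_zero (right_ne_zero_of_mul (hJ ▸ ha'))
  have hspan : Ideal.span {a} = J * b := hJ.trans (mul_comm _ _)
  refine ⟨⟨J, hJ₀⟩, ?_, hspan⟩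
  rw [eq_inv_iff_mul_eq_one, ← map_mul, ClassGroup.mk0_eq_one_iff]
  exact ⟨a, hspan.symm⟩

theorem exists_equiv_mk0_eq_inv_prod_units {R : Type*} [CommRing R] [IsDedekindDomain R]
    (b : (Ideal R)⁰) :
    ∃ (α : {J : (Ideal R)⁰ // ClassGroup.mk0 J = (ClassGroup.mk0 b)⁻¹} → R)
      (e : {J : (Ideal R)⁰ // ClassGroup.mk0 J = (ClassGroup.mk0 b)⁻¹} × Rˣ ≃
        {a : R // a ∈ (b : Ideal R) ∧ a ≠ 0}),
      (∀ J, Ideal.span {α J} = (J.1 : Ideal R) * b) ∧ ∀ J u, (e (J, u) : R) = u * α J := by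
  have hb : (b : Ideal R) ≠ 0 := nonZeroDivisors.coe_ne_zero b
  have hgen (J : {J : (Ideal R)⁰ // ClassGroup.mk0 J = (ClassGroup.mk0 b)⁻¹}) :
      ∃ a : R, Ideal.span {a} = (J.1 : Ideal R) * b := by
    have hJ : ClassGroup.mk0 (J.1 * b) = 1 := by rw [map_mul, J.2, inv_mul_cancel]
    obtain ⟨a, ha⟩ := (ClassGroup.mk0_eq_one_iff (J.1 * b).2).1 hJ
    exact ⟨a, ha.symm⟩
  choose α hα using hgen
  have hα₀ (J) : α J ≠ 0 := fun h => by
    have hJ := hα J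
    rw [h, Ideal.span_singleton_eq_bot.2 rfl] at hJ
    exact mul_ne_zero (nonZeroDivisors.coe_ne_zero J.1) hb hJ.symm
  have hmem (J) : α J ∈ (b : Ideal R) := by
    have : Ideal.span {α J} ≤ (b : Ideal R) := (hα J).trans_le Ideal.mul_le_right
    exact this (Ideal.mem_span_singleton_self _)
  let f : {J : (Ideal R)⁰ // ClassGroup.mk0 J = (ClassGroup.mk0 b)⁻¹} × Rˣ →
      {a : R // a ∈ (b : Ideal R) ∧ a ≠ 0} := fun p =>
    ⟨p.2 * α p.1, Ideal.mul_mem_left _ _ (hmem _), mul_ne_zero p.2.ne_zero (hα₀ _)⟩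
  have hf : Function.Bijective f := by
    refine ⟨fun ⟨J, u⟩ ⟨J', u'⟩ h => ?_, fun ⟨a, ha, ha₀⟩ => ?_⟩
    · have hassoc : (u : R) * α J = u' * α J' := congrArg Subtype.val h
      have hspan : (J.1 : Ideal R) * b = J'.1 * b := by
        rw [← hα, ← hα, ← Ideal.span_singleton_mul_left_unit u.isUnit, hassoc,
          Ideal.span_singleton_mul_left_unit u'.isUnit]
      obtain rfl : J = J' := Subtype.ext (Subtype.ext (mul_right_cancel₀ hb hspan))
      rw [Units.ext (mul_right_cancel₀ (hα₀ J) hassoc)]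
    · obtain ⟨J, hJ, hspanJ⟩ := exists_mk0_eq_inv_span_singleton_eq_mul ha ha₀
      obtain ⟨u, hu⟩ := Ideal.span_singleton_eq_span_singleton.1 ((hα ⟨J, hJ⟩).trans hspanJ.symm)
      exact ⟨(⟨J, hJ⟩, u), Subtype.ext ((mul_comm _ _).trans hu)⟩
  exact ⟨α, Equiv.ofBijective f hf, hα, fun J u => rfl⟩

variable {K : Type*} [Field K] [NumberField K]

open scoped Classical in
theorem mem_span_fractionalIdealLatticeBasis_mk0 (b : (Ideal (𝓞 K))⁰) (x : mixedSpace K) :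
    x ∈ span ℤ (range (fractionalIdealLatticeBasis K (FractionalIdeal.mk0 K b))) ↔
      ∃ a ∈ (b : Ideal (𝓞 K)), mixedEmbedding K (a : K) = x := by
  rw [mem_span_fractionalIdealLatticeBasis]
  simp [FractionalIdeal.coe_mk0]

open scoped Classical in
theorem hasSum_span_fractionalIdealLatticeBasis_iff (b : (Ideal (𝓞 K))⁰) {f : mixedSpace K → ℝ}
    (hf : f 0 = 0) {s : ℝ} :
    HasSum (fun l : span ℤ (range (fractionalIdealLatticeBasis K (FractionalIdeal.mk0 K b))) =>
      f l) s ↔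
    HasSum (fun a : {a : 𝓞 K // a ∈ (b : Ideal (𝓞 K)) ∧ a ≠ 0} =>
      f (mixedEmbedding K (a.1 : K))) s := by
  let ψ : {a : 𝓞 K // a ∈ (b : Ideal (𝓞 K)) ∧ a ≠ 0} →
      span ℤ (range (fractionalIdealLatticeBasis K (FractionalIdeal.mk0 K b))) := fun a =>
    ⟨mixedEmbedding K (a.1 : K), (mem_span_fractionalIdealLatticeBasis_mk0 b _).2 ⟨a, a.2.1, rfl⟩⟩
  have hψ : Function.Injective ψ := fun a a' h => Subtype.ext
    (RingOfIntegers.ext (mixedEmbedding_injective K (congrArg Subtype.val h)))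
  refine (hψ.hasSum_iff fun l hl => ?_).symm
  obtain ⟨a, ha, hal⟩ := (mem_span_fractionalIdealLatticeBasis_mk0 b _).1 l.2
  by_cases ha₀ : a = 0
  · simpa [← hal, ha₀] using hf
  · exact absurd ⟨⟨a, ha, ha₀⟩, Subtype.ext hal⟩ hl

theorem mixedEmbedding_norm_smul_of_span_eq_mul {r : ℝ} (hr : 0 ≤ r) {a : 𝓞 K}
    {J b : Ideal (𝓞 K)} (ha : Ideal.span {a} = J * b) :
    mixedEmbedding.norm (r • mixedEmbedding K (a : K)) =
      r ^ finrank ℚ K * Ideal.absNorm b * Ideal.absNorm J := by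
  rw [mixedEmbedding.norm_smul, abs_of_nonneg hr, mul_assoc, ← Nat.cast_mul, ← map_mul, mul_comm b,
    ← ha, Ideal.absNorm_span_singleton, mixedEmbedding.norm_eq_norm, ← Algebra.coe_norm_int]
  simp [Nat.cast_natAbs]

variable {g : ℝ → ℝ}

open scoped Classical in
theorem tsum_unitCutoff_smul (hc : HasCompactSupport g) (hpos : tsupport g ⊆ Ioi 0)
    (b : (Ideal (𝓞 K))⁰) {r : ℝ} (hr : r ∈ Ioc (0 : ℝ) 1) :
    ∑' l : span ℤ (range (fractionalIdealLatticeBasis K (FractionalIdeal.mk0 K b))),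
        unitCutoff g (r • (0 + (l : mixedSpace K))) =
      torsionOrder K * ∑' J : {J : (Ideal (𝓞 K))⁰ // ClassGroup.mk0 J = (ClassGroup.mk0 b)⁻¹},
        g (r ^ finrank ℚ K * Ideal.absNorm (b : Ideal (𝓞 K)) *
          Ideal.absNorm (J.1 : Ideal (𝓞 K))) := by
  obtain ⟨α, e, hα, he⟩ := exists_equiv_mk0_eq_inv_prod_units b
  have hzero : unitCutoff g (r • (0 : mixedSpace K)) = 0 := by
    have hg : g 0 = 0 := image_eq_zero_of_notMem_tsupport fun h => lt_irrefl (0 : ℝ) (hpos h)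
    simp [unitCutoff, hg]
  have hsum := (summable_comp_smul_add (fractionalIdealLatticeBasis K (FractionalIdeal.mk0 K b))
    (hasCompactSupport_unitCutoff hc hpos) hr 0).hasSum
  simp only [zero_add] at hsum ⊢
  rw [hasSum_span_fractionalIdealLatticeBasis_iff b (f := fun x => unitCutoff g (r • x)) hzero,
    ← e.hasSum_iff] at hsum
  rw [← tsum_mul_left]
  refine (hsum.prod_fiberwise fun J => ?_).tsum_eq.symm
  have hnorm := mixedEmbedding_norm_smul_of_span_eq_mul hr.1.le (hα J)
  have hne : mixedEmbedding.norm (r • mixedEmbedding K (α J : K)) ≠ 0 := by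
    have hN (I : (Ideal (𝓞 K))⁰) : (Ideal.absNorm (I : Ideal (𝓞 K)) : ℝ) ≠ 0 :=
      Nat.cast_ne_zero.2 (Ideal.absNorm_ne_zero_of_nonZeroDivisors I)
    rw [hnorm]
    exact mul_ne_zero (mul_ne_zero (pow_ne_zero _ hr.1.ne') (hN b)) (hN J.1)
  rw [← hnorm]
  refine (hasSum_unitCutoff_smul hne).congr_fun fun u => ?_
  rw [Function.comp_apply, he, unitSMul_smul, mul_smul_comm, ← map_mul]
  rfl

open scoped Classical in
theorem measureReal_fundamentalDomain_fractionalIdealLatticeBasis_mk0 (b : (Ideal (𝓞 K))⁰) :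
    (volume : Measure (mixedSpace K)).real (ZSpan.fundamentalDomain
        (fractionalIdealLatticeBasis K (FractionalIdeal.mk0 K b))) =
      Ideal.absNorm (b : Ideal (𝓞 K)) *
        (volume : Measure (mixedSpace K)).real (ZSpan.fundamentalDomain (latticeBasis K)) := by
  rw [measureReal_def, volume_fundamentalDomain_fractionalIdealLatticeBasis, ENNReal.toReal_mul,
    ENNReal.toReal_ofReal (by exact_mod_cast FractionalIdeal.absNorm_nonneg _)]
  simp only [FractionalIdeal.coe_mk0, FractionalIdeal.coeIdeal_absNorm, measureReal_def,
    Rat.cast_natCast]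

open scoped Classical in
theorem exists_abs_tsum_comp_mul_absNorm_sub_div_le (k : ℕ) (hg : ContDiff ℝ ∞ g)
    (hc : HasCompactSupport g) (hpos : tsupport g ⊆ Ioi 0) :
    ∃ c : ℝ, ∀ C : ClassGroup (𝓞 K), ∃ M : ℝ, ∀ t ∈ Ioc (0 : ℝ) 1,
      |∑' J : {J : (Ideal (𝓞 K))⁰ // ClassGroup.mk0 J = C},
        g (t * Ideal.absNorm (J.1 : Ideal (𝓞 K))) - c / t| ≤ M * t ^ k := by
  set D := (volume : Measure (mixedSpace K)).real (ZSpan.fundamentalDomain (latticeBasis K))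
  have hD : 0 < D := ENNReal.toReal_pos (ZSpan.measure_fundamentalDomain_ne_zero _)
    (ZSpan.fundamentalDomain_isBounded _).measure_lt_top.ne
  set w : ℝ := ((torsionOrder K : ℕ) : ℝ)
  have hw : 0 < w := Nat.cast_pos.2 (torsionOrder_pos K)
  set F := ∫ x : mixedSpace K, unitCutoff g x
  refine ⟨F / (D * w), fun C => ?_⟩
  obtain ⟨b, hb⟩ := ClassGroup.mk0_surjective C⁻¹
  obtain rfl : C = (ClassGroup.mk0 b)⁻¹ := by rw [hb, inv_inv]
  set n := finrank ℚ K
  have hn : n ≠ 0 := finrank_pos.ne'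
  set N : ℝ := ((Ideal.absNorm (b : Ideal (𝓞 K)) : ℕ) : ℝ)
  have hN : 1 ≤ N :=
    Nat.one_le_cast.2 (Nat.one_le_iff_ne_zero.2 (Ideal.absNorm_ne_zero_of_nonZeroDivisors b))
  have hN₀ : 0 < N := zero_lt_one.trans_le hN
  obtain ⟨A, hA⟩ := exists_abs_latticeRiemannSum_sub_integral_le
    (fractionalIdealLatticeBasis K (FractionalIdeal.mk0 K b)) volume (n * (k + 1))
    (contDiff_unitCutoff hg hpos) (hasCompactSupport_unitCutoff hc hpos)
  refine ⟨A / (N ^ (k + 1) * D * w), fun t ⟨ht₀, ht₁⟩ => ?_⟩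
  set r := (t / N) ^ ((n : ℝ)⁻¹)
  have hrn : r ^ n = t / N := Real.rpow_inv_natCast_pow (by positivity) hn
  have hrpow : r ^ (n * (k + 1)) = (t / N) ^ (k + 1) := by rw [pow_mul, hrn]
  have hr : r ∈ Ioc (0 : ℝ) 1 := ⟨by positivity, Real.rpow_le_one (by positivity)
    (by rw [div_le_one hN₀]; exact ht₁.trans hN) (by positivity)⟩
  have hbound := hA r hr 0 (zero_mem_fundamentalDomain _)
  rw [latticeRiemannSum, tsum_unitCutoff_smul hc hpos b hr, mixedEmbedding.finrank K,
    measureReal_fundamentalDomain_fractionalIdealLatticeBasis_mk0, hrn,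
    div_mul_cancel₀ _ hN₀.ne'] at hbound
  set Z := ∑' J : {J : (Ideal (𝓞 K))⁰ // ClassGroup.mk0 J = (ClassGroup.mk0 b)⁻¹},
    g (t * Ideal.absNorm (J.1 : Ideal (𝓞 K)))
  have hfactor : N * D * (t / N * (w * Z)) - F = D * w * t * (Z - F / (D * w) / t) := by
    field_simp
  rw [hfactor, abs_mul, abs_of_pos (by positivity)] at hbound
  rw [← mul_le_mul_iff_right₀ (by positivity : 0 < D * w * t)]
  exact hbound.trans_eq (by rw [hrpow, div_pow, pow_succ t]; field_simp)

end ClassCount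

section FiberSeries

variable {ι : Type*} {N : ι → ℕ} {c : ι → ℂ}

/-- The coefficients of the Dirichlet series `∑ i, c i * N i ^ (-s)` over an arbitrary family once
the terms with the same value of `N` are collected, which makes it an `LSeries`. -/
noncomputable def fiberCoeff (N : ι → ℕ) (c : ι → ℂ) (n : ℕ) : ℂ := ∑' i : {i // N i = n}, c i

theorem hasSum_term_fiberCoeff (hN : ∀ i, N i ≠ 0) {s L : ℂ}
    (hL : HasSum (fun i => c i * (N i : ℂ) ^ (-s)) L) :
    HasSum (LSeries.term (fiberCoeff N c) s) L := by
  have hterm (n : ℕ) :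
      LSeries.term (fiberCoeff N c) s n = ∑' i : {i // N i = n}, c i * (N i : ℂ) ^ (-s) := by
    rcases eq_or_ne n 0 with rfl | hn
    · have : IsEmpty {i // N i = 0} := ⟨fun i => hN i i.2⟩
      rw [LSeries.term_zero, tsum_empty]
    · rw [LSeries.term_of_ne_zero hn, fiberCoeff, div_eq_mul_inv, ← Complex.cpow_neg,
        ← tsum_mul_right]
      exact tsum_congr fun i => by rw [i.2]
  rw [← (Equiv.sigmaFiberEquiv N).hasSum_iff] at hL
  exact hL.sigma fun n => hterm n ▸ (hL.summable.sigma_factor n).hasSum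

theorem LSeries_fiberCoeff (hN : ∀ i, N i ≠ 0) {s : ℂ}
    (hs : Summable fun i => c i * (N i : ℂ) ^ (-s)) :
    LSeries (fiberCoeff N c) s = ∑' i, c i * (N i : ℂ) ^ (-s) :=
  (hasSum_term_fiberCoeff hN hs.hasSum).tsum_eq

theorem abscissaOfAbsConv_fiberCoeff_le (hN : ∀ i, N i ≠ 0) {x : ℝ}
    (hsum : ∀ σ : ℝ, x < σ → Summable fun i => c i * (N i : ℂ) ^ (-(σ : ℂ))) :
    LSeries.abscissaOfAbsConv (fiberCoeff N c) ≤ x :=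
  LSeries.abscissaOfAbsConv_le_of_forall_lt_LSeriesSummable fun σ hσ =>
    (hasSum_term_fiberCoeff hN (hsum σ hσ).hasSum).summable

theorem logMul_fiberCoeff :
    LSeries.logMul (fiberCoeff N c) = fiberCoeff N fun i => (Real.log (N i) : ℂ) * c i := by
  ext n
  rw [LSeries.logMul, fiberCoeff, fiberCoeff, ← tsum_mul_left]
  exact tsum_congr fun i => by rw [i.2, Complex.natCast_log]

theorem summable_of_LSeriesSummable_fiberCoeff (hN : ∀ i, N i ≠ 0)
    (hfin : ∀ n : ℕ, {i | N i ≤ n}.Finite) {a : ι → ℝ} (ha : 0 ≤ a) {σ : ℝ}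
    (hs : LSeriesSummable (fiberCoeff N fun i => (a i : ℂ)) σ) :
    Summable fun i => a i * (N i : ℝ) ^ (-σ) := by
  have hfiber (n : ℕ) : Finite {i // N i = n} := (hfin n).subset fun i hi => hi.le
  have hnonneg (i : ι) : 0 ≤ a i * (N i : ℝ) ^ (-σ) := mul_nonneg (ha i) (by positivity)
  rw [← (Equiv.sigmaFiberEquiv N).summable_iff]
  refine (summable_sigma_of_nonneg fun _ => hnonneg _).2
    ⟨fun n => .of_finite, hs.norm.congr fun n => ?_⟩
  rw [LSeries.norm_term_eq]
  split_ifs with hn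
  · have : IsEmpty {i // N i = n} := ⟨fun i => hN i (i.2.trans hn)⟩
    rw [tsum_empty]
  · have htsum : 0 ≤ ∑' i : {i // N i = n}, a i := tsum_nonneg fun i => ha i
    rw [fiberCoeff, ← Complex.ofReal_tsum, Complex.norm_of_nonneg htsum, Complex.ofReal_re,
      div_eq_mul_inv, ← Real.rpow_neg n.cast_nonneg, ← tsum_mul_right]
    exact tsum_congr fun i => by
      simp only [Equiv.sigmaFiberEquiv_apply, i.2]

end FiberSeries

section MellinTransform

theorem eventually_atTop_eq_zero {E : Type*} [Zero E] {f : ℝ → E}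
    (hc : HasCompactSupport f) : f =ᶠ[atTop] 0 := by
  obtain ⟨b, hb⟩ := hc.isCompact.bddAbove
  filter_upwards [eventually_gt_atTop b] with t ht
  exact image_eq_zero_of_notMem_tsupport fun h => ht.not_ge (hb h)

theorem eventually_nhdsGT_zero_eq_zero {E : Type*} [Zero E] {f : ℝ → E}
    (hpos : tsupport f ⊆ Ioi 0) : f =ᶠ[𝓝[>] 0] 0 :=
  (notMem_tsupport_iff_eventuallyEq.1 fun h => lt_irrefl (0 : ℝ) (hpos h)).filter_mono
    nhdsWithin_le_nhds

variable {E : Type*} [NormedAddCommGroup E] [NormedSpace ℂ E] {f : ℝ → E}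

theorem integrable_cpow_smul (hf : Continuous f) (hc : HasCompactSupport f)
    (hpos : tsupport f ⊆ Ioi 0) (s : ℂ) : Integrable fun t : ℝ => (t : ℂ) ^ s • f t := by
  have hcont : Continuous fun t : ℝ => (t : ℂ) ^ s • f t :=
    continuous_of_tsupport fun t ht => by
      have ht₀ : 0 < t := hpos (tsupport_smul_subset_right _ _ ht)
      exact (Complex.continuousAt_ofReal_cpow_const t s (Or.inr ht₀.ne')).smul hf.continuousAt
  exact hcont.integrable_of_hasCompactSupport hc.smul_left

theorem differentiable_mellin_of_hasCompactSupport (hf : Continuous f) (hc : HasCompactSupport f)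
    (hpos : tsupport f ⊆ Ioi 0) : Differentiable ℂ (mellin f) := fun s =>
  mellin_differentiableAt_of_isBigO_rpow (a := s.re + 1) (b := s.re - 1)
    (hf.locallyIntegrable.locallyIntegrableOn _)
    ((Asymptotics.isBigO_zero _ _).congr' (eventually_atTop_eq_zero hc).symm .rfl) (by linarith)
    ((Asymptotics.isBigO_zero _ _).congr' (eventually_nhdsGT_zero_eq_zero hpos).symm .rfl)
    (by linarith)

theorem re_ofReal_cpow {t : ℝ} (ht : 0 < t) (s : ℂ) :
    ((t : ℂ) ^ s).re = t ^ s.re * Real.cos (s.im * Real.log t) := by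
  rw [Complex.cpow_def_of_ne_zero (Complex.ofReal_ne_zero.2 ht.ne'), ← Complex.ofReal_log ht.le,
    Complex.exp_re, Complex.re_ofReal_mul, Complex.im_ofReal_mul, Real.rpow_def_of_pos ht,
    mul_comm s.im]

theorem mellin_ofReal_ne_zero {g : ℝ → ℝ} (hg : Continuous g) (hc : HasCompactSupport g)
    (hpos : tsupport g ⊆ Ioi 0) (hnonneg : 0 ≤ g) (h1 : g 1 ≠ 0) {s : ℂ}
    (hs : ∀ t ∈ tsupport g, |s.im * Real.log t| < Real.pi / 2) :
    mellin (fun t => (g t : ℂ)) s ≠ 0 := by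
  set F : ℝ → ℝ := fun t => ((t : ℂ) ^ (s - 1)).re * g t
  have hF (t) (ht : t ∈ tsupport g) : 0 ≤ ((t : ℂ) ^ (s - 1)).re := by
    have ht₀ : 0 < t := hpos ht
    have hcos := Real.cos_pos_of_mem_Ioo (abs_lt.1 (hs t ht))
    rw [re_ofReal_cpow ht₀, Complex.sub_im, Complex.one_im, sub_zero]
    positivity
  have hcont : Continuous F := continuous_of_tsupport fun t ht => by
    have ht₀ : 0 < t := hpos (tsupport_mul_subset_right ht)
    exact (Complex.continuous_re.continuousAt.comp
      (Complex.continuousAt_ofReal_cpow_const t _ (Or.inr ht₀.ne'))).mul hg.continuousAt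
  have hpos' : 0 < ∫ t, F t := by
    refine hcont.integral_pos_of_hasCompactSupport_nonneg_nonzero hc.mul_left (fun t => ?_)
      (x := 1) (by simpa [F] using h1)
    by_cases ht : t ∈ tsupport g
    · exact mul_nonneg (hF t ht) (hnonneg t)
    · simp [F, image_eq_zero_of_notMem_tsupport ht]
  have hre : (mellin (fun t => (g t : ℂ)) s).re = ∫ t, F t := by
    have hint := integrable_cpow_smul (f := fun t => (g t : ℂ)) (by fun_prop)
      (hc.comp_left Complex.ofReal_zero)
      ((tsupport_comp_subset Complex.ofReal_zero g).trans hpos) (s - 1)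
    rw [mellin, setIntegral_eq_integral_of_forall_compl_eq_zero]
    · exact (Complex.reCLM.integral_comp_comm hint).symm.trans (by simp [F])
    · intro t ht
      rw [image_eq_zero_of_notMem_tsupport fun h => ht (hpos h), Complex.ofReal_zero, smul_zero]
  exact fun h => hpos'.ne' (by rw [← hre, h, Complex.zero_re])

end MellinTransform

section SmoothedSums

variable {ι : Type*} {N : ι → ℕ} {c : ι → ℂ} {f : ℝ → ℂ}

/-- The sum of the coefficients `c i` weighted by the cutoff `f (t * N i)`. Its Mellin transform is
the Dirichlet series `∑ i, c i * N i ^ (-s)` times the Mellin transform of `f`. -/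
noncomputable def smoothedSum (N : ι → ℕ) (c : ι → ℂ) (f : ℝ → ℂ) (t : ℝ) : ℂ :=
  ∑' i, c i * f (t * N i)

theorem exists_forall_comp_mul_eq_zero (hc : HasCompactSupport f)
    (hfin : ∀ n : ℕ, {i | N i ≤ n}.Finite) {a : ℝ} (ha : 0 < a) :
    ∃ T : Finset ι, ∀ t, a ≤ t → ∀ i ∉ T, f (t * N i) = 0 := by
  obtain ⟨b, hb⟩ := eventually_atTop.1 (eventually_atTop_eq_zero hc)
  refine ⟨(hfin ⌈b / a⌉₊).toFinset, fun t ht i hi => hb _ ?_⟩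
  rw [Finite.mem_toFinset, mem_ofPred_eq, not_le] at hi
  have hi' : b / a ≤ N i := (Nat.le_ceil _).trans (Nat.cast_le.2 hi.le)
  calc b ≤ a * N i := by rwa [div_le_iff₀' ha] at hi'
    _ ≤ t * N i := by gcongr

theorem summable_mul_comp_mul (hc : HasCompactSupport f) (hfin : ∀ n : ℕ, {i | N i ≤ n}.Finite)
    (c : ι → ℂ) {t : ℝ} (ht : 0 < t) : Summable fun i => c i * f (t * N i) := by
  obtain ⟨T, hT⟩ := exists_forall_comp_mul_eq_zero hc hfin ht
  exact summable_of_ne_finset_zero fun i hi => by rw [hT t le_rfl i hi, mul_zero]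

theorem continuousOn_smoothedSum (hf : Continuous f) (hc : HasCompactSupport f)
    (hfin : ∀ n : ℕ, {i | N i ≤ n}.Finite) : ContinuousOn (smoothedSum N c f) (Ioi 0) := by
  intro t ht
  obtain ⟨T, hT⟩ := exists_forall_comp_mul_eq_zero hc hfin (half_pos ht)
  have heq : smoothedSum N c f =ᶠ[𝓝 t] fun u => ∑ i ∈ T, c i * f (u * N i) := by
    filter_upwards [Ioi_mem_nhds (half_lt_self ht)] with u hu
    exact tsum_eq_sum fun i hi => by rw [hT u (mem_Ioi.1 hu).le i hi, mul_zero]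
  exact (ContinuousAt.congr (by fun_prop) heq.symm).continuousWithinAt

theorem smoothedSum_eventually_eq_zero (hc : HasCompactSupport f) (hN : ∀ i, N i ≠ 0) :
    smoothedSum N c f =ᶠ[atTop] 0 := by
  obtain ⟨b, hb⟩ := eventually_atTop.1 (eventually_atTop_eq_zero hc)
  filter_upwards [eventually_ge_atTop b, eventually_ge_atTop 0] with t ht ht₀
  refine (tsum_congr fun i => ?_).trans tsum_zero
  have hle : b ≤ t * N i :=
    ht.trans (le_mul_of_one_le_right ht₀ (Nat.one_le_cast.2 (Nat.one_le_iff_ne_zero.2 (hN i))))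
  rw [hb _ hle, Pi.zero_apply, mul_zero]

theorem integral_norm_cpow_mul_comp_mul_right (f : ℝ → ℂ) (s : ℂ) {a : ℝ} (ha : 0 < a) :
    ∫ t in Ioi (0 : ℝ), ‖(t : ℂ) ^ (s - 1) * f (t * a)‖ =
      a ^ (-s.re) * ∫ t in Ioi (0 : ℝ), ‖(t : ℂ) ^ (s - 1) * f t‖ := by
  have hscale : ∀ t ∈ Ioi (0 : ℝ), ‖(t : ℂ) ^ (s - 1) * f (t * a)‖ =
      a ^ (1 - s.re) * ‖((t * a : ℝ) : ℂ) ^ (s - 1) * f (t * a)‖ := fun t ht => by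
    have hone : a ^ (1 - s.re) * a ^ (s.re - 1) = 1 := by
      rw [← Real.rpow_add ha, sub_add_sub_cancel', sub_self, Real.rpow_zero]
    rw [norm_mul, norm_mul, Complex.norm_cpow_eq_rpow_re_of_pos ht,
      Complex.norm_cpow_eq_rpow_re_of_pos (mul_pos ht ha), Real.mul_rpow (le_of_lt ht) ha.le,
      Complex.sub_re, Complex.one_re]
    linear_combination -(t ^ (s.re - 1) * ‖f (t * a)‖) * hone
  rw [setIntegral_congr_fun measurableSet_Ioi hscale, integral_const_mul,
    integral_comp_mul_right_Ioi (fun t : ℝ => ‖(t : ℂ) ^ (s - 1) * f t‖) 0 ha, zero_mul,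
    smul_eq_mul, ← mul_assoc, ← Real.rpow_neg_one, ← Real.rpow_add ha]
  congr 2
  ring

theorem mellin_smoothedSum [Countable ι] (hf : Continuous f) (hc : HasCompactSupport f)
    (hpos : tsupport f ⊆ Ioi 0) (hN : ∀ i, N i ≠ 0) {s : ℂ}
    (hs : Summable fun i => ‖c i‖ * (N i : ℝ) ^ (-s.re)) :
    mellin (smoothedSum N c f) s = mellin f s * ∑' i, c i * (N i : ℂ) ^ (-s) := by
  have hN' (i : ι) : (0 : ℝ) < N i := Nat.cast_pos.2 (Nat.pos_of_ne_zero (hN i))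
  set F : ι → ℝ → ℂ := fun i t => c i * ((t : ℂ) ^ (s - 1) * f (t * N i))
  have hF (i : ι) : Integrable (F i) (volume.restrict (Ioi 0)) := by
    have hconv : MellinConvergent f s := (integrable_cpow_smul hf hc hpos (s - 1)).integrableOn
    simpa only [F, smul_eq_mul, mul_comm _ (N i : ℝ), IntegrableOn] using
      ((MellinConvergent.comp_mul_left (hN' i)).2 hconv).integrable.const_mul (c i)
  have hintegral (i : ι) :
      ∫ t in Ioi (0 : ℝ), F i t = mellin f s * (c i * (N i : ℂ) ^ (-s)) := by
    have := mellin_comp_mul_right f s (hN' i)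
    rw [integral_const_mul, ← Complex.ofReal_natCast (N i), mul_left_comm, mul_comm (mellin f s)]
    exact congrArg _ this
  have hsum : Summable fun i => ∫ t in Ioi (0 : ℝ), ‖F i t‖ := by
    refine (hs.mul_right (∫ t in Ioi (0 : ℝ), ‖(t : ℂ) ^ (s - 1) * f t‖)).congr fun i => ?_
    simp_rw [F, norm_mul (c i)]
    rw [integral_const_mul, integral_norm_cpow_mul_comp_mul_right f s (hN' i), mul_assoc]
  have hswap := (hasSum_integral_of_summable_integral_norm hF hsum).tsum_eq
  simp only [hintegral, tsum_mul_left] at hswap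
  rw [hswap, mellin]
  congr 1 with t
  simp only [F, smoothedSum, smul_eq_mul, ← tsum_mul_left, mul_left_comm (c _)]

theorem exists_mellin_eq_add_div_sub_one {Z : ℝ → ℂ} (hZ : ContinuousOn Z (Ioi 0))
    (htop : Z =ᶠ[atTop] 0) {κ : ℂ} {k : ℝ}
    (hbot : (fun t : ℝ => Z t - κ / t) =O[𝓝[>] 0] fun t : ℝ => t ^ k) :
    ∃ H : ℂ → ℂ, DifferentiableOn ℂ H {s | -k < s.re} ∧
      ∀ s : ℂ, -k < s.re → 1 < s.re → mellin Z s = H s + κ / (s - 1) := by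
  set P : ℝ → ℂ := indicator (Ioc 0 1) fun t => (t : ℂ) ^ (-1 : ℂ)
  have hloc : LocallyIntegrableOn (fun t => Z t - κ * P t) (Ioi 0) := by
    refine (hZ.locallyIntegrableOn measurableSet_Ioi).sub fun x hx => ?_
    have hcont : ContinuousOn (fun t : ℝ => (t : ℂ) ^ (-1 : ℂ)) (Ioi 0) := fun t ht =>
      (Complex.continuousAt_ofReal_cpow_const t _ (Or.inr (ne_of_gt ht))).continuousWithinAt
    obtain ⟨U, hU, hint⟩ := hcont.locallyIntegrableOn measurableSet_Ioi (μ := volume) x hx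
    exact ⟨U, hU, (hint.indicator measurableSet_Ioc).const_mul κ⟩
  have hdecay : (fun t => Z t - κ * P t) =ᶠ[atTop] 0 := by
    filter_upwards [htop, eventually_gt_atTop 1] with t ht ht₁
    simp [ht, P, indicator_of_notMem (fun h : t ∈ Ioc 0 1 => ht₁.not_ge h.2)]
  have hzero : (fun t => Z t - κ * P t) =O[𝓝[>] 0] fun t : ℝ => t ^ (-(-k)) := by
    refine hbot.congr' ?_ (by simp [EventuallyEq.refl])
    filter_upwards [Ioc_mem_nhdsGT zero_lt_one] with t ht
    simp only [P, indicator_of_mem ht, Complex.cpow_neg_one, div_eq_mul_inv]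
  have hconv (s : ℂ) (hs : -k < s.re) : MellinConvergent (fun t => Z t - κ * P t) s :=
    mellinConvergent_of_isBigO_rpow (a := s.re + 1) hloc
      ((Asymptotics.isBigO_zero _ _).congr' hdecay.symm .rfl) (by linarith) hzero hs
  refine ⟨mellin fun t => Z t - κ * P t, fun s hs => ?_, fun s hs hs₁ => ?_⟩
  · exact (mellin_differentiableAt_of_isBigO_rpow (a := s.re + 1) hloc
      ((Asymptotics.isBigO_zero _ _).congr' hdecay.symm .rfl) (by linarith) hzero
      hs).differentiableWithinAt
  · have hP := hasMellin_cpow_Ioc (-1) (s := s) (by simpa using hs₁)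
    have hκP := hasMellin_const_smul hP.1 κ
    have hsum := (hasMellin_add (hconv s hs) hκP.1).2
    rw [show (fun t => Z t - κ * P t + κ • P t) = Z from funext fun t => by simp] at hsum
    rw [hsum, hκP.2, hP.2, smul_eq_mul, mul_one_div, ← sub_eq_add_neg]

end SmoothedSums

section IdealDirichletSeries

open NumberField IsDedekindDomain

theorem hasSum_mul_of_forall_hasSum_dvd {M ι : Type*} [CommMonoid M] [IsLeftCancelMul M]
    {f : M →* ℂ} {q : ι → M} {w : ι → ℂ} {v : M → ℂ} (hf : Summable fun a => ‖f a‖)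
    (hw : Summable fun i => ‖w i * f (q i)‖)
    (hv : ∀ a, HasSum (fun i : {i // q i ∣ a} => w i) (v a)) :
    HasSum (fun a => v a * f a) ((∑' i, w i * f (q i)) * ∑' a, f a) := by
  have hprod : HasSum (fun x : ι × M => w x.1 * f (q x.1) * f x.2)
      ((∑' i, w i * f (q i)) * ∑' a, f a) :=
    (tsum_mul_tsum_of_summable_norm hw hf).symm ▸ (summable_mul_of_summable_norm hw hf).hasSum
  rw [← (Equiv.sigmaFiberEquiv fun x : ι × M => q x.1 * x.2).hasSum_iff] at hprod
  refine hprod.sigma fun a => ?_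
  let e : {x : ι × M // q x.1 * x.2 = a} ≃ {i // q i ∣ a} := by
    refine Equiv.ofBijective (fun x => ⟨x.1.1, x.1.2, x.2.symm⟩)
      ⟨?_, fun ⟨i, b, hb⟩ => ⟨⟨(i, b), hb.symm⟩, rfl⟩⟩
    rintro ⟨⟨i, b⟩, hb⟩ ⟨⟨j, b'⟩, hb'⟩ hij
    obtain rfl : i = j := congrArg Subtype.val hij
    obtain rfl : b = b' := mul_left_cancel (hb.trans hb'.symm)
    rfl
  refine (e.hasSum_iff.2 ((hv a).mul_right (f a))).congr_fun fun x => ?_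
  change w x.1.1 * f (q x.1.1) * f x.1.2 = w x.1.1 * f a
  rw [mul_assoc, ← map_mul, x.2]

variable {R : Type*} [CommRing R] [IsDedekindDomain R]

/-- The positive prime powers of a Dedekind domain, `(P, k)` standing for `P ^ (k + 1)`. -/
def primePow (i : HeightOneSpectrum R × ℕ) : (Ideal R)⁰ :=
  ⟨i.1.asIdeal ^ (i.2 + 1), mem_nonZeroDivisors_of_ne_zero (pow_ne_zero _ i.1.ne_bot)⟩

theorem primePow_injective : Function.Injective (primePow (R := R)) := by
  rintro ⟨P, k⟩ ⟨Q, l⟩ hij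
  have hpow : P.asIdeal ^ (k + 1) = Q.asIdeal ^ (l + 1) := congrArg Subtype.val hij
  obtain rfl : P = Q :=
    HeightOneSpectrum.ext (eq_of_prime_pow_eq P.prime Q.prime k.succ_pos hpow)
  rw [Nat.succ_injective (pow_injective_of_not_isUnit P.prime.not_isUnit P.prime.ne_zero hpow)]

open scoped Classical in
theorem primePow_dvd_iff {i : HeightOneSpectrum R × ℕ} {J : (Ideal R)⁰} :
    primePow i ∣ J ↔ (i.1.asIdeal, i.2) ∈
      (UniqueFactorizationMonoid.normalizedFactors (J : Ideal R)).toEnumFinset := by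
  have hJ : (J : Ideal R) ≠ 0 := nonZeroDivisors.coe_ne_zero J
  have hcoe : primePow i ∣ J ↔ i.1.asIdeal ^ (i.2 + 1) ∣ (J : Ideal R) := by
    refine ⟨map_dvd (nonZeroDivisors (Ideal R)).subtype, fun ⟨I, hI⟩ => ?_⟩
    exact ⟨⟨I, mem_nonZeroDivisors_of_ne_zero (right_ne_zero_of_mul (hI ▸ hJ))⟩, Subtype.ext hI⟩
  rw [hcoe, pow_dvd_iff_le_emultiplicity,
    UniqueFactorizationMonoid.emultiplicity_eq_count_normalizedFactors i.1.prime.irreducible hJ,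
    normalize_eq, Multiset.mem_toEnumFinset, Nat.cast_le, Nat.succ_le_iff]

variable {K : Type*} [Field K] [NumberField K]

open scoped Classical in
theorem hasSum_log_absNorm_of_primePow_dvd (J : (Ideal (𝓞 K))⁰) :
    HasSum (fun i : {i // primePow i ∣ J} => Real.log (Ideal.absNorm i.1.1.asIdeal))
      (Real.log (Ideal.absNorm (J : Ideal (𝓞 K)))) := by
  have hJ : (J : Ideal (𝓞 K)) ≠ ⊥ := nonZeroDivisors.coe_ne_zero J
  set m := UniqueFactorizationMonoid.normalizedFactors (J : Ideal (𝓞 K))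
  have hm (x : Ideal (𝓞 K) × ℕ) (hx : x ∈ m.toEnumFinset) : Prime x.1 :=
    UniqueFactorizationMonoid.prime_of_normalized_factor _ (Multiset.mem_of_mem_toEnumFinset hx)
  let e : {i // primePow i ∣ J} ≃ m.toEnumFinset :=
    Equiv.ofBijective (fun i => ⟨(i.1.1.asIdeal, i.1.2), primePow_dvd_iff.1 i.2⟩)
      ⟨fun i j hij => Subtype.ext <| Prod.ext
        (HeightOneSpectrum.ext (congrArg (fun x => x.1.1) hij)) (congrArg (fun x => x.1.2) hij),
      fun ⟨x, hx⟩ => ⟨⟨(⟨x.1, Ideal.isPrime_of_prime (hm x hx), (hm x hx).ne_zero⟩, x.2),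
        primePow_dvd_iff.2 hx⟩, rfl⟩⟩
  have hsum : Real.log (Ideal.absNorm (J : Ideal (𝓞 K))) =
      ∑ x ∈ m.toEnumFinset, Real.log (Ideal.absNorm x.1) := by
    rw [← Ideal.prod_normalizedFactors_eq_self hJ, Multiset.prod_eq_prod_toEnumFinset, map_prod,
      Nat.cast_prod, Real.log_prod fun x hx => Nat.cast_ne_zero.2 <|
        Ideal.absNorm_eq_zero_iff.not.2 (hm x hx).ne_zero]
  rw [hsum]
  exact e.hasSum_iff.2
    (m.toEnumFinset.hasSum fun x : Ideal (𝓞 K) × ℕ => Real.log (Ideal.absNorm x.1))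

end IdealDirichletSeries

section IdealCharacters

open NumberField IsDedekindDomain

variable {K : Type*} [Field K] [NumberField K]

/-- The absolute norm, viewed as a function on the nonzero ideals of `𝓞 K`. -/
noncomputable def idealNorm (J : (Ideal (𝓞 K))⁰) : ℕ := Ideal.absNorm (J : Ideal (𝓞 K))

theorem idealNorm_ne_zero (J : (Ideal (𝓞 K))⁰) : idealNorm J ≠ 0 :=
  Ideal.absNorm_ne_zero_of_nonZeroDivisors J

theorem idealNorm_mul (I J : (Ideal (𝓞 K))⁰) : idealNorm (I * J) = idealNorm I * idealNorm J :=
  map_mul Ideal.absNorm _ _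

theorem idealNorm_eq_one_iff {J : (Ideal (𝓞 K))⁰} : idealNorm J = 1 ↔ J = 1 := by
  rw [idealNorm, Ideal.absNorm_eq_one_iff, ← Ideal.one_eq_top, OneMemClass.coe_eq_one]

theorem idealNorm_primePow (i : HeightOneSpectrum (𝓞 K) × ℕ) :
    idealNorm (primePow i) = Ideal.absNorm i.1.asIdeal ^ (i.2 + 1) :=
  map_pow Ideal.absNorm _ _

theorem finite_setOf_idealNorm_le (n : ℕ) : {J : (Ideal (𝓞 K))⁰ | idealNorm J ≤ n}.Finite :=
  Ideal.finite_setOfPred_absNorm_le₀ n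

theorem countable_nonzeroIdeals : Countable (Ideal (𝓞 K))⁰ :=
  countable_univ_iff.1 <|
    (countable_iUnion fun n => (finite_setOf_idealNorm_le n).countable).mono fun J _ =>
      mem_iUnion.2 ⟨idealNorm J, le_refl (idealNorm J)⟩

theorem LSeriesSummable_fiberCoeff_idealNorm_one {σ : ℝ} (hσ : 1 < σ) :
    LSeriesSummable (fiberCoeff (idealNorm (K := K)) 1) σ := by
  have hne : ∀ᶠ s : ℝ in 𝓝[>] 1, dedekindZeta K s ≠ 0 := by
    have hres : (dedekindZeta_residue K : ℂ) ≠ 0 := by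
      exact_mod_cast dedekindZeta_residue_ne_zero K
    filter_upwards [(tendsto_sub_one_mul_dedekindZeta_nhdsGT K).eventually_ne hres] with s hs
    exact right_ne_zero_of_mul hs
  obtain ⟨s, hs, hs₁⟩ := (hne.and (Ioo_mem_nhdsGT hσ)).exists
  have hsum :
      LSeriesSummable (fun n => (Nat.card {I : Ideal (𝓞 K) // Ideal.absNorm I = n} : ℂ)) s :=
    of_not_not fun h => hs (tsum_eq_zero_of_not_summable h)
  refine ((LSeriesSummable_congr _ fun {n} hn => ?_).1 hsum).of_re_le_re ?_
  · let e : {J : (Ideal (𝓞 K))⁰ // idealNorm J = n} ≃ {I : Ideal (𝓞 K) // Ideal.absNorm I = n} :=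
      Equiv.ofBijective (fun J => ⟨J.1, J.2⟩)
        ⟨fun I J h => Subtype.ext (Subtype.ext (congrArg Subtype.val h :)),
        fun ⟨I, hI⟩ => ⟨⟨⟨I, mem_nonZeroDivisors_of_ne_zero fun h => hn ?_⟩, hI⟩, rfl⟩⟩
    · rw [← Nat.card_congr e, fiberCoeff]
      simp
    · rw [← hI, h, Ideal.zero_eq_bot, Ideal.absNorm_bot]
  · exact_mod_cast hs₁.2.le

theorem summable_idealNorm_rpow_neg {σ : ℝ} (hσ : 1 < σ) :
    Summable fun J : (Ideal (𝓞 K))⁰ => (idealNorm J : ℝ) ^ (-σ) := by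
  simpa using summable_of_LSeriesSummable_fiberCoeff idealNorm_ne_zero finite_setOf_idealNorm_le
    (a := 1) zero_le_one (by simpa using! LSeriesSummable_fiberCoeff_idealNorm_one hσ)

theorem summable_log_mul_idealNorm_rpow_neg {σ : ℝ} (hσ : 1 < σ) :
    Summable fun J : (Ideal (𝓞 K))⁰ => Real.log (idealNorm J) * (idealNorm J : ℝ) ^ (-σ) := by
  refine summable_of_LSeriesSummable_fiberCoeff idealNorm_ne_zero finite_setOf_idealNorm_le
    (fun J => Real.log_natCast_nonneg _) ?_
  have habs : LSeries.abscissaOfAbsConv (fiberCoeff (idealNorm (K := K)) 1) ≤ 1 :=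
    LSeries.abscissaOfAbsConv_le_of_forall_lt_LSeriesSummable fun s hs =>
      LSeriesSummable_fiberCoeff_idealNorm_one hs
  have hlog := LSeriesSummable_logMul_of_lt_re (s := σ) (habs.trans_lt (by exact_mod_cast hσ))
  rw [logMul_fiberCoeff] at hlog
  simpa using hlog

theorem summable_log_mul_idealNorm_primePow_rpow_neg {σ : ℝ} (hσ : 1 < σ) :
    Summable fun i : HeightOneSpectrum (𝓞 K) × ℕ =>
      Real.log (Ideal.absNorm i.1.asIdeal) * (idealNorm (primePow i) : ℝ) ^ (-σ) := by
  refine Summable.of_nonneg_of_le (fun i => mul_nonneg (Real.log_natCast_nonneg _) (by positivity))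
    (fun i => mul_le_mul_of_nonneg_right ?_ (by positivity))
    ((summable_log_mul_idealNorm_rpow_neg hσ).comp_injective primePow_injective)
  rw [idealNorm_primePow, Nat.cast_pow, Real.log_pow, Nat.cast_succ]
  nlinarith [Real.log_natCast_nonneg (Ideal.absNorm i.1.asIdeal), i.2.cast_nonneg (α := ℝ)]

/-- The twist `J ↦ χ J * N J ^ (-s)` of a character of the nonzero ideals. -/
noncomputable def idealTwist (χ : (Ideal (𝓞 K))⁰ →* ℂ) (s : ℂ) : (Ideal (𝓞 K))⁰ →* ℂ where
  toFun J := χ J * (idealNorm J : ℂ) ^ (-s)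
  map_one' := by simp [idealNorm_eq_one_iff.2]
  map_mul' I J := by
    rw [map_mul, idealNorm_mul, Nat.cast_mul, Complex.natCast_mul_natCast_cpow, mul_mul_mul_comm]

/-- The `L`-function `∑ χ(J) N(J) ^ (-s)`, the sum being over the nonzero ideals `J`. -/
noncomputable def idealLFunction (χ : (Ideal (𝓞 K))⁰ →* ℂ) (s : ℂ) : ℂ := ∑' J, idealTwist χ s J

/-- The series `∑ log N(P) χ(P ^ k) N(P ^ k) ^ (-s)` over the prime powers `P ^ k`, `1 ≤ k`. It is
minus the logarithmic derivative of `idealLFunction χ`. -/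
noncomputable def idealLogSeries (χ : (Ideal (𝓞 K))⁰ →* ℂ) (s : ℂ) : ℂ :=
  ∑' i, (Real.log (Ideal.absNorm i.1.asIdeal) : ℂ) * idealTwist χ s (primePow i)

variable {χ : (Ideal (𝓞 K))⁰ →* ℂ} (hχ : ∀ J, ‖χ J‖ ≤ 1) {s : ℂ} (hs : 1 < s.re)

include hχ

theorem norm_idealTwist_le (s : ℂ) (J : (Ideal (𝓞 K))⁰) :
    ‖idealTwist χ s J‖ ≤ (idealNorm J : ℝ) ^ (-s.re) := by
  change ‖χ J * (idealNorm J : ℂ) ^ (-s)‖ ≤ _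
  rw [norm_mul, Complex.norm_natCast_cpow_of_pos (Nat.pos_of_ne_zero (idealNorm_ne_zero J)),
    Complex.neg_re]
  exact mul_le_of_le_one_left (by positivity) (hχ J)

include hs

theorem summable_norm_idealTwist : Summable fun J => ‖idealTwist χ s J‖ :=
  .of_nonneg_of_le (fun _ => norm_nonneg _) (norm_idealTwist_le hχ s)
    (summable_idealNorm_rpow_neg hs)

theorem summable_norm_log_mul_idealTwist_primePow :
    Summable fun i : HeightOneSpectrum (𝓞 K) × ℕ =>
      ‖(Real.log (Ideal.absNorm i.1.asIdeal) : ℂ) * idealTwist χ s (primePow i)‖ := by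
  refine .of_nonneg_of_le (fun _ => norm_nonneg _) (fun i => ?_)
    (summable_log_mul_idealNorm_primePow_rpow_neg hs)
  rw [norm_mul, Complex.norm_of_nonneg (Real.log_natCast_nonneg _)]
  exact mul_le_mul_of_nonneg_left (norm_idealTwist_le hχ s _) (Real.log_natCast_nonneg _)

theorem LSeries_fiberCoeff_idealNorm :
    LSeries (fiberCoeff idealNorm χ) s = idealLFunction χ s :=
  LSeries_fiberCoeff idealNorm_ne_zero (summable_norm_idealTwist hχ hs).of_norm

omit hs

theorem abscissaOfAbsConv_fiberCoeff_idealNorm_le :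
    LSeries.abscissaOfAbsConv (fiberCoeff idealNorm χ) ≤ 1 := by
  exact_mod_cast abscissaOfAbsConv_fiberCoeff_le idealNorm_ne_zero (x := 1) fun σ hσ =>
    (summable_norm_idealTwist hχ (s := σ) hσ).of_norm

include hs

theorem hasDerivAt_idealLFunction :
    HasDerivAt (idealLFunction χ) (-(idealLogSeries χ s * idealLFunction χ s)) s := by
  have habs : LSeries.abscissaOfAbsConv (fiberCoeff idealNorm χ) < s.re :=
    (abscissaOfAbsConv_fiberCoeff_idealNorm_le hχ).trans_lt (by exact_mod_cast hs)
  have hderiv := LSeries_hasDerivAt habs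
  have hlog := hasSum_mul_of_forall_hasSum_dvd (summable_norm_idealTwist hχ hs)
    (summable_norm_log_mul_idealTwist_primePow hχ hs)
    fun J => Complex.hasSum_ofReal.2 (hasSum_log_absNorm_of_primePow_dvd J)
  have hlogMul : LSeries (LSeries.logMul (fiberCoeff idealNorm χ)) s =
      idealLogSeries χ s * idealLFunction χ s := by
    rw [logMul_fiberCoeff]
    refine (hasSum_term_fiberCoeff idealNorm_ne_zero (hlog.congr_fun fun J => ?_)).tsum_eq
    exact mul_assoc _ _ _
  rw [hlogMul] at hderiv
  refine hderiv.congr_of_eventuallyEq ?_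
  filter_upwards [(isOpen_lt continuous_const Complex.continuous_re).mem_nhds hs] with z hz
  exact (LSeries_fiberCoeff_idealNorm hχ hz).symm

omit hs

theorem tendsto_idealLFunction_atTop :
    Tendsto (fun σ : ℝ => idealLFunction χ σ) atTop (𝓝 1) := by
  have habs := abscissaOfAbsConv_fiberCoeff_idealNorm_le hχ
  have hone : fiberCoeff idealNorm χ 1 = 1 := by
    let e : {J : (Ideal (𝓞 K))⁰ // J = 1} ≃ {J : (Ideal (𝓞 K))⁰ // idealNorm J = 1} :=
      Equiv.subtypeEquivRight fun J => idealNorm_eq_one_iff.symm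
    rw [fiberCoeff, ← e.tsum_eq, tsum_fintype]
    exact (Fintype.sum_unique _).trans (map_one χ)
  rw [← hone]
  refine (LSeries.tendsto_atTop (habs.trans_lt (by decide))).congr' ?_
  filter_upwards [eventually_gt_atTop 1] with σ hσ
  exact LSeries_fiberCoeff_idealNorm hχ hσ

end IdealCharacters

section ClassCharacters

open NumberField IsDedekindDomain

theorem exists_testFunction_mellin_ne_zero (B : ℝ) :
    ∃ g : ℝ → ℝ, ContDiff ℝ ∞ g ∧ HasCompactSupport g ∧ tsupport g ⊆ Ioi 0 ∧
      ∀ s : ℂ, |s.im| ≤ B → mellin (fun t => (g t : ℂ)) s ≠ 0 := by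
  have hlog : ∀ᶠ t in 𝓝 (1 : ℝ), 0 < t ∧ B * |Real.log t| < Real.pi / 2 := by
    refine (lt_mem_nhds one_pos).and (Tendsto.eventually_lt_const (v := 0) (by positivity) ?_)
    simpa using ((Real.continuousAt_log one_ne_zero).abs.const_mul B).tendsto
  obtain ⟨ε, hε, hball⟩ := Metric.nhds_basis_closedBall.eventually_iff.1 hlog
  let g : ContDiffBump (1 : ℝ) := ⟨ε / 2, ε, half_pos hε, half_lt_self hε⟩
  have hsupp (t : ℝ) (ht : t ∈ tsupport g) : 0 < t ∧ B * |Real.log t| < Real.pi / 2 :=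
    hball (g.tsupport_eq ▸ ht)
  have hone : g 1 ≠ 0 := by
    rw [g.one_of_mem_closedBall (Metric.mem_closedBall_self g.rIn_pos.le)]
    exact one_ne_zero
  refine ⟨g, g.contDiff, g.hasCompactSupport, fun t ht => (hsupp t ht).1, fun s hs => ?_⟩
  refine mellin_ofReal_ne_zero g.continuous g.hasCompactSupport (fun t ht => (hsupp t ht).1)
    (fun _ => g.nonneg) hone fun t ht => ?_
  rw [abs_mul]
  exact (mul_le_mul_of_nonneg_right hs (abs_nonneg _)).trans_lt (hsupp t ht).2

variable {K : Type*} [Field K] [NumberField K]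

/-- The character of the nonzero ideals induced by a character of the class group. -/
noncomputable def classChar (ψ : AddChar (Additive (ClassGroup (𝓞 K))) ℂ) :
    (Ideal (𝓞 K))⁰ →* ℂ where
  toFun J := ψ (Additive.ofMul (ClassGroup.mk0 J))
  map_one' := by simp
  map_mul' I J := by simp [AddChar.map_add_eq_mul]

variable {ψ : AddChar (Additive (ClassGroup (𝓞 K))) ℂ}

theorem norm_classChar_le (ψ : AddChar (Additive (ClassGroup (𝓞 K))) ℂ) (J : (Ideal (𝓞 K))⁰) :
    ‖classChar ψ J‖ ≤ 1 := (ψ.norm_apply _).le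

theorem smoothedSum_classChar {g : ℝ → ℝ} (hc : HasCompactSupport g) {t : ℝ} (ht : 0 < t) :
    smoothedSum idealNorm (classChar ψ) (fun t => (g t : ℂ)) t =
      ∑ C : ClassGroup (𝓞 K), ψ (Additive.ofMul C) *
        ((∑' J : {J : (Ideal (𝓞 K))⁰ // ClassGroup.mk0 J = C},
          g (t * Ideal.absNorm (J.1 : Ideal (𝓞 K))) : ℝ) : ℂ) := by
  have hsum := summable_mul_comp_mul (hc.comp_left Complex.ofReal_zero) finite_setOf_idealNorm_le
    (classChar ψ) ht
  rw [smoothedSum, ← (Equiv.sigmaFiberEquiv ClassGroup.mk0).tsum_eq]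
  rw [← (Equiv.sigmaFiberEquiv ClassGroup.mk0).summable_iff] at hsum
  refine (hsum.tsum_sigma).trans ((tsum_fintype _).trans (Finset.sum_congr rfl fun C _ => ?_))
  rw [Complex.ofReal_tsum, ← tsum_mul_left]
  refine tsum_congr fun J => ?_
  obtain ⟨J, rfl⟩ := J
  rfl

open scoped Classical in
theorem exists_smoothedSum_classChar_sub_isBigO (k : ℕ) {g : ℝ → ℝ} (hg : ContDiff ℝ ∞ g)
    (hc : HasCompactSupport g) (hpos : tsupport g ⊆ Ioi 0) :
    ∃ κ : ℂ, ∀ (ψ : AddChar (Additive (ClassGroup (𝓞 K))) ℂ),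
      (fun t : ℝ => smoothedSum idealNorm (classChar ψ) (fun t => (g t : ℂ)) t -
        (if ψ = 0 then κ else 0) / t) =O[𝓝[>] 0] fun t : ℝ => t ^ (k : ℝ) := by
  obtain ⟨c, hclass⟩ := exists_abs_tsum_comp_mul_absNorm_sub_div_le (K := K) k hg hc hpos
  choose M hM using hclass
  refine ⟨Fintype.card (ClassGroup (𝓞 K)) * c, fun ψ => ?_⟩
  refine Asymptotics.IsBigO.of_bound (∑ C, M C) ?_
  filter_upwards [Ioc_mem_nhdsGT zero_lt_one] with t ht
  have hmain : (if ψ = 0 then Fintype.card (ClassGroup (𝓞 K)) * (c : ℂ) else 0) / t =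
      ∑ C : ClassGroup (𝓞 K), ψ (Additive.ofMul C) * ((c / t : ℝ) : ℂ) := by
    rw [← Finset.sum_mul, Equiv.sum_comp Additive.ofMul ψ, AddChar.sum_eq_ite,
      Fintype.card_additive]
    split_ifs <;> push_cast <;> ring
  rw [smoothedSum_classChar hc ht.1, hmain, ← Finset.sum_sub_distrib, Real.rpow_natCast,
    norm_pow, Real.norm_of_nonneg ht.1.le, Finset.sum_mul]
  refine (norm_sum_le _ _).trans (Finset.sum_le_sum fun C _ => ?_)
  rw [← mul_sub, norm_mul, AddChar.norm_apply, one_mul, ← Complex.ofReal_sub, Complex.norm_real]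
  exact hM C t ht

open scoped Classical in
theorem exists_mellin_mul_idealLFunction_continuation {g : ℝ → ℝ} (hg : ContDiff ℝ ∞ g)
    (hc : HasCompactSupport g) (hpos : tsupport g ⊆ Ioi 0)
    (ψ : AddChar (Additive (ClassGroup (𝓞 K))) ℂ) :
    ∃ A : ℂ → ℂ, DifferentiableOn ℂ A {s | -1 < s.re} ∧ ∀ s : ℂ, 1 < s.re →
      A s = (if ψ = 0 then s - 1 else 1) *
        (mellin (fun t => (g t : ℂ)) s * idealLFunction (classChar ψ) s) := by
  have hg' : Continuous fun t => (g t : ℂ) := Complex.continuous_ofReal.comp hg.continuous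
  have hc' : HasCompactSupport fun t => (g t : ℂ) := hc.comp_left Complex.ofReal_zero
  have hpos' : tsupport (fun t => (g t : ℂ)) ⊆ Ioi 0 :=
    (tsupport_comp_subset Complex.ofReal_zero g).trans hpos
  obtain ⟨κ, hbot⟩ := exists_smoothedSum_classChar_sub_isBigO (K := K) 1 hg hc hpos
  obtain ⟨H, hH, hmellin⟩ := exists_mellin_eq_add_div_sub_one
    (continuousOn_smoothedSum hg' hc' finite_setOf_idealNorm_le)
    (smoothedSum_eventually_eq_zero hc' idealNorm_ne_zero) (hbot ψ)
  rw [Nat.cast_one] at hH hmellin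
  have hL (s : ℂ) (hs : 1 < s.re) : mellin (fun t => (g t : ℂ)) s * idealLFunction (classChar ψ) s =
      H s + (if ψ = 0 then κ else 0) / (s - 1) := by
    rw [← hmellin s (by linarith) hs]
    have := countable_nonzeroIdeals (K := K)
    refine (mellin_smoothedSum hg' hc' hpos' idealNorm_ne_zero ?_).symm
    exact Summable.of_nonneg_of_le (fun _ => by positivity)
      (fun J => mul_le_of_le_one_left (by positivity) (norm_classChar_le ψ J))
      (summable_idealNorm_rpow_neg hs)
  by_cases hψ : ψ = 0
  · refine ⟨fun s => (s - 1) * H s + κ, by fun_prop, fun s hs => ?_⟩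
    have hs' : s - 1 ≠ 0 := sub_ne_zero.2 fun h => by simp [h] at hs
    rw [hL s hs, if_pos hψ, if_pos hψ]
    field_simp
  · exact ⟨H, hH, fun s hs => by simp [hL s hs, hψ]⟩

open scoped Classical in
theorem exists_idealLFunction_continuation (B : ℝ)
    (ψ : AddChar (Additive (ClassGroup (𝓞 K))) ℂ) :
    ∃ A : ℂ → ℂ, DifferentiableOn ℂ A {s | -1 < s.re ∧ |s.im| ≤ B} ∧
      ∀ s : ℂ, 1 < s.re → |s.im| ≤ B →
        A s = (if ψ = 0 then s - 1 else 1) * idealLFunction (classChar ψ) s := by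
  obtain ⟨g, hg, hc, hpos, hmellin⟩ := exists_testFunction_mellin_ne_zero B
  obtain ⟨A, hA, hAL⟩ := exists_mellin_mul_idealLFunction_continuation hg hc hpos ψ
  have hmellin_diff : Differentiable ℂ (mellin fun t => (g t : ℂ)) :=
    differentiable_mellin_of_hasCompactSupport (Complex.continuous_ofReal.comp hg.continuous)
      (hc.comp_left Complex.ofReal_zero) ((tsupport_comp_subset Complex.ofReal_zero g).trans hpos)
  refine ⟨fun s => A s / mellin (fun t => (g t : ℂ)) s, ?_, fun s hs hsB => ?_⟩
  · exact (hA.mono fun s hs => hs.1).fun_div hmellin_diff.differentiableOn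
      fun s hs => hmellin s hs.2
  · dsimp only
    rw [hAL s hs, mul_left_comm, mul_div_cancel_left₀ _ (hmellin s hsB)]

open scoped Classical in
/-- The weights of the von Mangoldt function of the ideal class `C`: the prime power `P ^ (k + 1)`,
indexed by `(P, k)`, has weight `h log N(P)` if it lies in `C`, where `h` is the class number. -/
noncomputable def classVonMangoldt (C : ClassGroup (𝓞 K)) (i : HeightOneSpectrum (𝓞 K) × ℕ) : ℝ :=
  if ClassGroup.mk0 (primePow i) = C then
    Fintype.card (ClassGroup (𝓞 K)) * Real.log (Ideal.absNorm i.1.asIdeal) else 0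

theorem hasSum_classVonMangoldt_mul_cpow (C : ClassGroup (𝓞 K)) {s : ℂ} (hs : 1 < s.re) :
    HasSum (fun i => (classVonMangoldt C i : ℂ) * (idealNorm (primePow i) : ℂ) ^ (-s))
      (∑ ψ : AddChar (Additive (ClassGroup (𝓞 K))) ℂ,
        ψ (-Additive.ofMul C) * idealLogSeries (classChar ψ) s) := by
  classical
  have hψ (ψ : AddChar (Additive (ClassGroup (𝓞 K))) ℂ) :=
    (summable_norm_log_mul_idealTwist_primePow (norm_classChar_le ψ) hs).of_norm.hasSum.mul_left
      (ψ (-Additive.ofMul C))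
  refine (hasSum_sum fun ψ _ => hψ ψ).congr_fun fun i => ?_
  set x := Additive.ofMul (ClassGroup.mk0 (primePow i))
  have hx : -Additive.ofMul C + x = 0 ↔ ClassGroup.mk0 (primePow i) = C := by
    rw [neg_add_eq_zero, eq_comm]
    exact Additive.ofMul.injective.eq_iff
  have horth : (∑ ψ : AddChar (Additive (ClassGroup (𝓞 K))) ℂ, ψ (-Additive.ofMul C) * ψ x) =
      if ClassGroup.mk0 (primePow i) = C then (Fintype.card (ClassGroup (𝓞 K)) : ℂ) else 0 := by
    simp_rw [← AddChar.map_add_eq_mul]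
    rw [AddChar.sum_apply_eq_ite]
    simp only [hx, Fintype.card_additive]
  calc ((classVonMangoldt C i : ℝ) : ℂ) * (idealNorm (primePow i) : ℂ) ^ (-s)
    _ = (∑ ψ : AddChar (Additive (ClassGroup (𝓞 K))) ℂ, ψ (-Additive.ofMul C) * ψ x) *
          (Real.log (Ideal.absNorm i.1.asIdeal) * (idealNorm (primePow i) : ℂ) ^ (-s)) := by
      rw [horth, classVonMangoldt]
      split_ifs <;> push_cast <;> ring
    _ = _ := by
      rw [Finset.sum_mul]
      exact Finset.sum_congr rfl fun ψ _ => by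
        rw [mul_assoc, mul_left_comm (ψ x)]
        rfl

end ClassCharacters

section Landau

open scoped ComplexOrder

theorem iteratedDeriv_alternating_of_deriv_eq_neg_mul {f V : ℂ → ℂ} {c : ℂ} (hf : AnalyticAt ℂ f c)
    (hV : AnalyticAt ℂ V c) (hderiv : deriv f =ᶠ[𝓝 c] -(V * f)) (hfc : 0 ≤ f c)
    (hVc : ∀ n, 0 ≤ (-1) ^ n * iteratedDeriv n V c) (n : ℕ) :
    0 ≤ (-1) ^ n * iteratedDeriv n f c := by
  induction n using Nat.strong_induction_on with
  | _ n ih =>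
    rcases n with _ | n
    · simpa using hfc
    rw [iteratedDeriv_succ', hderiv.iteratedDeriv_eq n, iteratedDeriv_neg,
      iteratedDeriv_mul hV.contDiffAt hf.contDiffAt, pow_succ, mul_neg_one, neg_mul_neg,
      Finset.mul_sum]
    refine Finset.sum_nonneg fun i hi => ?_
    have hi' : i ≤ n := Nat.lt_succ_iff.1 (Finset.mem_range.1 hi)
    calc (0 : ℂ)
      _ ≤ n.choose i * ((-1) ^ i * iteratedDeriv i V c) *
            ((-1) ^ (n - i) * iteratedDeriv (n - i) f c) :=
        mul_nonneg (mul_nonneg (Nat.cast_nonneg _) (hVc i)) (ih _ (by lia))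
      _ = (-1) ^ (i + (n - i)) *
            (n.choose i * iteratedDeriv i V c * iteratedDeriv (n - i) f c) := by ring
      _ = _ := by rw [Nat.add_sub_cancel' hi']

theorem apply_le_of_iteratedDeriv_alternating_of_ball {f : ℂ → ℂ} {c : ℂ} {r : ℝ}
    (hf : DifferentiableOn ℂ f (Metric.ball c r))
    (h : ∀ n, 0 ≤ (-1) ^ n * iteratedDeriv n f c) {z : ℂ} (hz : z ≤ c)
    (hzr : z ∈ Metric.ball c r) : f c ≤ f z := by
  have hmaps : MapsTo (fun z : ℂ => -z) (Metric.ball (-c) r) (Metric.ball c r) := fun z hz => by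
    rwa [Metric.mem_ball, ← dist_neg_neg, neg_neg]
  have hsub : DifferentiableOn ℂ (fun z => f (-z) - f c) (Metric.ball (-c) r) :=
    (hf.comp differentiable_neg.differentiableOn hmaps).sub_const _
  have hnonneg (n : ℕ) : 0 ≤ iteratedDeriv n (fun z => f (-z) - f c) (-c) := by
    rcases n with _ | n
    · simp
    · have hderiv : deriv (fun z => f (-z) - f c) = deriv fun z => f (-z) :=
        funext fun _ => deriv_sub_const _
      rw [iteratedDeriv_succ', hderiv, ← iteratedDeriv_succ', iteratedDeriv_comp_neg, neg_neg,
        smul_eq_mul]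
      exact h (n + 1)
  have hle := hsub.nonneg_of_iteratedDeriv_nonneg hnonneg (neg_le_neg hz)
    (by rwa [Metric.mem_ball, dist_neg_neg])
  simpa using hle

theorem LSeries_eq_add_LSeries_update {a : ℕ → ℂ} {s : ℂ} (hs : LSeriesSummable a s) {n : ℕ}
    (hn : n ≠ 0) :
    LSeries a s = a n * (n : ℂ) ^ (-s) + LSeries (Function.update a n 0) s := by
  rw [LSeries, hs.tsum_eq_add_tsum_ite n, LSeries.term_of_ne_zero hn, div_eq_mul_inv,
    ← Complex.cpow_neg]
  refine congrArg _ (tsum_congr fun m => ?_)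
  rcases eq_or_ne m n with rfl | hm <;> simp_all [LSeries.term_def]

theorem abscissaOfAbsConv_update (f : ℕ → ℂ) (n : ℕ) (w : ℂ) :
    LSeries.abscissaOfAbsConv (Function.update f n w) = LSeries.abscissaOfAbsConv f := by
  refine LSeries.abscissaOfAbsConv_congr' ?_
  filter_upwards [eventually_ne_atTop n] with m hm
  exact Function.update_of_ne hm _ _

theorem hasDerivAt_exp_neg_div_log_mul {n : ℕ} (hn : 2 ≤ n) (a : ℝ) (w s : ℂ) :
    HasDerivAt (fun s => Complex.exp (-(a / Real.log n : ℝ) * ((n : ℂ) ^ (-s) - w)))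
      (Complex.exp (-(a / Real.log n : ℝ) * ((n : ℂ) ^ (-s) - w)) * (a * (n : ℂ) ^ (-s))) s := by
  have hlog : (Real.log n : ℂ) ≠ 0 :=
    Complex.ofReal_ne_zero.2 (Real.log_pos (Nat.one_lt_cast.2 hn)).ne'
  have hpow := (((hasDerivAt_neg s).const_cpow (c := (n : ℂ))
    (Or.inl (Nat.cast_ne_zero.2 (by lia)))).sub_const w).const_mul (-((a / Real.log n : ℝ) : ℂ))
  refine hpow.cexp.congr_deriv ?_
  rw [← Complex.natCast_log, Complex.ofReal_div]
  field_simp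

/- The exponential factor deletes the `n`-th term of the Dirichlet series and leaves the other
nonnegative coefficients alone, so that the product still increases to the left of `σ`. -/
theorem one_le_mul_exp_of_hasDerivAt_eq_neg_LSeries_mul {a : ℕ → ℝ} (ha : 0 ≤ a) {σ x r : ℝ}
    (hσ : LSeries.abscissaOfAbsConv (fun n => (a n : ℂ)) < σ) {D : ℂ → ℂ}
    (hD : DifferentiableOn ℂ D (Metric.ball (σ : ℂ) r)) (hDσ : D σ = 1)
    (hderiv : ∀ᶠ s in 𝓝 (σ : ℂ), HasDerivAt D (-(LSeries (fun n => (a n : ℂ)) s * D s)) s)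
    (hxσ : x ≤ σ) (hxr : σ - r < x) {n : ℕ} (hn : 2 ≤ n) :
    1 ≤ D x * Complex.exp
      (-(a n / Real.log n : ℝ) * ((n : ℂ) ^ (-x : ℂ) - (n : ℂ) ^ (-σ : ℂ))) := by
  set e : ℂ → ℂ := fun s =>
    Complex.exp (-(a n / Real.log n : ℝ) * ((n : ℂ) ^ (-s) - (n : ℂ) ^ (-σ : ℂ)))
  have he (s : ℂ) : HasDerivAt e (e s * (a n * (n : ℂ) ^ (-s))) s :=
    hasDerivAt_exp_neg_div_log_mul hn _ _ s
  set a' : ℕ → ℂ := Function.update (fun n => (a n : ℂ)) n 0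
  have ha' : 0 ≤ a' := fun m => by
    rcases eq_or_ne m n with rfl | hm
    · simp [a']
    · simpa [a', hm] using ha m
  have habs : LSeries.abscissaOfAbsConv a' < σ := by rwa [abscissaOfAbsConv_update]
  have hDe : DifferentiableOn ℂ (fun s => D s * e s) (Metric.ball (σ : ℂ) r) :=
    hD.mul fun s _ => (he s).differentiableAt.differentiableWithinAt
  have hDe' : deriv (fun s => D s * e s) =ᶠ[𝓝 (σ : ℂ)] -(LSeries a' * fun s => D s * e s) := by
    have hconv : {s : ℂ | LSeries.abscissaOfAbsConv (fun n => (a n : ℂ)) < s.re} ∈ 𝓝 (σ : ℂ) :=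
      (isOpen_lt continuous_const (continuous_coe_real_ereal.comp Complex.continuous_re)).mem_nhds
        hσ
    filter_upwards [hderiv, hconv] with s hs hs'
    rw [(hs.fun_mul (he s)).deriv,
      LSeries_eq_add_LSeries_update (n := n) (LSeriesSummable_of_abscissaOfAbsConv_lt_re hs')
        (by lia)]
    simp only [Pi.neg_apply, Pi.mul_apply, a']
    ring
  have hle := apply_le_of_iteratedDeriv_alternating_of_ball (z := x) hDe
    (iteratedDeriv_alternating_of_deriv_eq_neg_mul
      (hDe.analyticAt (Metric.ball_mem_nhds _ (by linarith))) (LSeries_analyticOnNhd a' σ habs)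
      hDe' (by simp [hDσ, e]) (LSeries.iteratedDeriv_alternating ha' habs))
    (by exact_mod_cast hxσ)
    (by
      rw [Metric.mem_ball, Complex.isometry_ofReal.dist_eq, Real.dist_eq, abs_lt]
      constructor <;> linarith)
  simpa [hDσ, e] using hle

theorem exists_forall_div_log_mul_le {a : ℕ → ℝ} (ha : 0 ≤ a) {σ x r : ℝ}
    (hσ : LSeries.abscissaOfAbsConv (fun n => (a n : ℂ)) < σ) {D : ℂ → ℂ}
    (hD : DifferentiableOn ℂ D (Metric.ball (σ : ℂ) r)) (hDσ : D σ ≠ 0)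
    (hderiv : ∀ᶠ s in 𝓝 (σ : ℂ), HasDerivAt D (-(LSeries (fun n => (a n : ℂ)) s * D s)) s)
    (hxσ : x ≤ σ) (hxr : σ - r < x) :
    ∃ M : ℝ, ∀ n : ℕ, 2 ≤ n → a n / Real.log n * ((n : ℝ) ^ (-x) - (n : ℝ) ^ (-σ)) ≤ M := by
  refine ⟨‖D x / D σ‖, fun n hn => ?_⟩
  set y := a n / Real.log n * ((n : ℝ) ^ (-x) - (n : ℝ) ^ (-σ))
  have hone := one_le_mul_exp_of_hasDerivAt_eq_neg_LSeries_mul (D := fun s => D s / D σ) ha hσ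
    (hD.div_const _) (div_self hDσ) (hderiv.mono fun s hs => (hs.div_const _).congr_deriv (by ring))
    hxσ hxr hn
  have hexp : (-(a n / Real.log n : ℝ) * ((n : ℂ) ^ (-x : ℂ) - (n : ℂ) ^ (-σ : ℂ)) : ℂ) =
      (-y : ℝ) := by
    push_cast [y, Complex.ofReal_cpow n.cast_nonneg]
    ring
  have hnorm := (Complex.le_def.1 hone).1.trans (Complex.re_le_norm _)
  rw [hexp, norm_mul, ← Complex.ofReal_exp, Complex.norm_of_nonneg (Real.exp_nonneg _),
    Real.exp_neg, ← div_eq_mul_inv, Complex.one_re, one_le_div (Real.exp_pos _)] at hnorm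
  linarith [Real.add_one_le_exp y]

end Landau

section PrimeIdeals

open NumberField IsDedekindDomain

theorem card_primesOver_le_finrank {R : Type*} (S : Type*) [CommRing R] [IsDomain R] [CommRing S]
    [Algebra R S] [Module.Finite R S] [Module.Flat R S] (p : Ideal R) [p.IsPrime] :
    Nat.card (p.primesOver S) ≤ finrank R S := by
  rcases finite_or_infinite (p.primesOver S) with h | h
  swap
  · simp
  have := Fintype.ofFinite (p.primesOver S)
  rw [← p.sum_ramification_inertia_eq_finrank S, Nat.card_eq_fintype_card, Fintype.card_eq_sum_ones]
  refine Finset.sum_le_sum fun P _ => ?_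
  have := P.2.1
  exact Nat.mul_pos (P.1.ramificationIdx_pos R) (P.1.inertiaDeg_pos R)

variable {K : Type*} [Field K]

/-- The rational prime below a maximal ideal. -/
noncomputable def primeBelow (P : HeightOneSpectrum (𝓞 K)) : ℕ :=
  Ideal.absNorm (P.asIdeal.under ℤ)

theorem asIdeal_mem_primesOver (P : HeightOneSpectrum (𝓞 K)) :
    P.asIdeal ∈ (Ideal.span {(primeBelow P : ℤ)}).primesOver (𝓞 K) :=
  ⟨P.isPrime, ⟨Int.ideal_span_absNorm_eq_self _⟩⟩

theorem prime_primeBelow (P : HeightOneSpectrum (𝓞 K)) : (primeBelow P).Prime :=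
  have : NeZero P.asIdeal := ⟨P.ne_bot⟩
  Nat.absNorm_under_prime P.asIdeal

variable [NumberField K]

theorem exists_absNorm_eq_primeBelow_pow (P : HeightOneSpectrum (𝓞 K)) :
    ∃ f ≠ 0, Ideal.absNorm P.asIdeal = primeBelow P ^ f := by
  have : P.asIdeal.LiesOver (Ideal.span {(primeBelow P : ℤ)}) :=
    (asIdeal_mem_primesOver P).2
  exact ⟨_, (P.asIdeal.inertiaDeg_pos ℤ).ne', (Ideal.pow_inertiaDeg _ _).symm⟩

theorem encard_setOf_primeBelow_eq_le (p : ℕ) :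
    {P : HeightOneSpectrum (𝓞 K) | primeBelow P = p}.encard ≤ finrank ℚ K := by
  by_cases hp : p.Prime
  swap
  · have hempty : {P : HeightOneSpectrum (𝓞 K) | primeBelow P = p} = ∅ :=
      eq_empty_of_forall_notMem fun P hP => hp (hP ▸ prime_primeBelow P)
    simp [hempty]
  have hprime : (Ideal.span {(p : ℤ)}).IsPrime :=
    (Ideal.span_singleton_prime (Nat.cast_ne_zero.2 hp.ne_zero)).2 (Nat.prime_iff_prime_int.1 hp)
  have hmax : (Ideal.span {(p : ℤ)}).IsMaximal := hprime.isMaximal (by simpa using hp.ne_zero)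
  calc {P : HeightOneSpectrum (𝓞 K) | primeBelow P = p}.encard
    _ ≤ ((Ideal.span {(p : ℤ)}).primesOver (𝓞 K)).encard :=
      encard_le_encard_of_injOn (f := HeightOneSpectrum.asIdeal)
        (fun P hP => hP ▸ asIdeal_mem_primesOver P) fun _ _ _ _ => HeightOneSpectrum.ext
    _ = Nat.card ((Ideal.span {(p : ℤ)}).primesOver (𝓞 K)) :=
      ((IsDedekindDomain.primesOver_finite _ _).cast_ncard_eq).symm
    _ ≤ finrank ℚ K := by
      rw [← RingOfIntegers.rank]
      exact_mod_cast card_primesOver_le_finrank (𝓞 K) (Ideal.span {(p : ℤ)})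

theorem exists_le_absNorm_asIdeal (n : ℕ) :
    ∃ P : HeightOneSpectrum (𝓞 K), n ≤ Ideal.absNorm P.asIdeal := by
  obtain ⟨p, hnp, hp⟩ := Nat.exists_infinite_primes n
  have hprime := (Ideal.span_singleton_prime (Nat.cast_ne_zero.2 hp.ne_zero)).2
    (Nat.prime_iff_prime_int.1 hp)
  obtain ⟨⟨P, hP, hPp⟩⟩ := (Ideal.span {(p : ℤ)}).nonempty_primesOver (S := 𝓞 K)
  have hbot : P ≠ ⊥ := Ideal.ne_bot_of_liesOver_of_ne_bot (p := Ideal.span {(p : ℤ)})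
    (by simpa using hp.ne_zero) P
  refine ⟨⟨P, hP, hbot⟩, hnp.trans ?_⟩
  rw [← Ideal.pow_inertiaDeg p P]
  exact Nat.le_self_pow (P.inertiaDeg_pos ℤ).ne' p

theorem summable_primeBelow_rpow_neg {σ : ℝ} (hσ : 1 < σ) :
    Summable fun P : HeightOneSpectrum (𝓞 K) => (primeBelow P : ℝ) ^ (-σ) := by
  have hnat : Summable fun p : ℕ => finrank ℚ K * (p : ℝ) ^ (-σ) :=
    (Real.summable_nat_rpow.2 (neg_lt_neg hσ)).mul_left _
  have hnonneg (P : HeightOneSpectrum (𝓞 K)) : 0 ≤ (primeBelow P : ℝ) ^ (-σ) := by positivity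
  rw [← (Equiv.sigmaFiberEquiv primeBelow).summable_iff]
  refine (summable_sigma_of_nonneg fun _ => hnonneg _).2 ⟨fun p => ?_, ?_⟩
  · have : Finite {P : HeightOneSpectrum (𝓞 K) // primeBelow P = p} :=
      finite_of_encard_le_coe (encard_setOf_primeBelow_eq_le p)
    exact .of_finite
  · refine Summable.of_nonneg_of_le (fun p => tsum_nonneg fun _ => hnonneg _) (fun p => ?_) hnat
    have hfiber (P : {P : HeightOneSpectrum (𝓞 K) // primeBelow P = p}) :
        ((primeBelow P.1 : ℕ) : ℝ) ^ (-σ) = (p : ℝ) ^ (-σ) := by rw [P.2]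
    simp only [Equiv.sigmaFiberEquiv_apply, hfiber, tsum_const, nsmul_eq_mul]
    gcongr
    exact ENat.toNat_le_of_le_natCast (encard_setOf_primeBelow_eq_le p)

theorem exists_idealNorm_primePow_eq_primeBelow_pow {i : HeightOneSpectrum (𝓞 K) × ℕ}
    (hi : ¬ (idealNorm (primePow i)).Prime) :
    ∃ m, 2 ≤ m ∧ i.2 + 1 ≤ m ∧ idealNorm (primePow i) = primeBelow i.1 ^ m := by
  obtain ⟨f, hf, hPf⟩ := exists_absNorm_eq_primeBelow_pow i.1
  have hN : idealNorm (primePow i) = primeBelow i.1 ^ (f * (i.2 + 1)) := by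
    rw [idealNorm_primePow, hPf, pow_mul]
  have hpos : i.2 + 1 ≤ f * (i.2 + 1) := Nat.le_mul_of_pos_left _ (Nat.pos_of_ne_zero hf)
  refine ⟨_, ?_, hpos, hN⟩
  by_contra! hlt
  have hone : f * (i.2 + 1) = 1 := by lia
  rw [hN, hone, pow_one] at hi
  exact hi (prime_primeBelow i.1)

theorem log_absNorm_le_idealNorm_primePow_rpow (i : HeightOneSpectrum (𝓞 K) × ℕ) :
    Real.log (Ideal.absNorm i.1.asIdeal) ≤ 4 * (idealNorm (primePow i) : ℝ) ^ (1 / 4 : ℝ) := by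
  have hpos : (0 : ℝ) < Ideal.absNorm i.1.asIdeal :=
    Nat.cast_pos.2 (Nat.pos_of_ne_zero (mt Ideal.absNorm_eq_zero_iff.1 i.1.ne_bot))
  have hle : Ideal.absNorm i.1.asIdeal ≤ idealNorm (primePow i) := by
    rw [idealNorm_primePow]
    exact Nat.le_self_pow i.2.succ_ne_zero _
  calc Real.log (Ideal.absNorm i.1.asIdeal)
    _ ≤ Real.log (idealNorm (primePow i)) := Real.log_le_log hpos (Nat.cast_le.2 hle)
    _ ≤ (idealNorm (primePow i) : ℝ) ^ (1 / 4 : ℝ) / (1 / 4) :=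
      Real.log_le_rpow_div (Nat.cast_nonneg _) (by norm_num)
    _ = 4 * (idealNorm (primePow i) : ℝ) ^ (1 / 4 : ℝ) := by ring

theorem log_mul_inv_le_primeBelow_rpow {i : HeightOneSpectrum (𝓞 K) × ℕ}
    (hi : ¬ (idealNorm (primePow i)).Prime) :
    Real.log (Ideal.absNorm i.1.asIdeal) * (idealNorm (primePow i) : ℝ)⁻¹ ≤
      4 * ((primeBelow i.1 : ℝ) ^ (-(5 / 4) : ℝ) * (2 ^ (-(1 / 8) : ℝ)) ^ i.2) := by
  obtain ⟨m, hm₂, hm₁, hN⟩ := exists_idealNorm_primePow_eq_primeBelow_pow hi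
  have hp : (2 : ℝ) ≤ primeBelow i.1 := by exact_mod_cast (prime_primeBelow i.1).two_le
  have hp₀ : (0 : ℝ) < primeBelow i.1 := by linarith
  have hm : 5 / 3 + (i.2 : ℝ) / 6 ≤ m := by
    have h₁ : (i.2 : ℝ) + 1 ≤ m := by exact_mod_cast hm₁
    have h₂ : (2 : ℝ) ≤ m := by exact_mod_cast hm₂
    linarith
  have hlog : Real.log (Ideal.absNorm i.1.asIdeal) ≤ 4 * (primeBelow i.1 : ℝ) ^ ((m : ℝ) / 4) := by
    refine (log_absNorm_le_idealNorm_primePow_rpow i).trans_eq ?_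
    rw [hN, Nat.cast_pow, ← Real.rpow_natCast, ← Real.rpow_mul hp₀.le]
    ring_nf
  calc Real.log (Ideal.absNorm i.1.asIdeal) * (idealNorm (primePow i) : ℝ)⁻¹
    _ ≤ 4 * (primeBelow i.1 : ℝ) ^ ((m : ℝ) / 4) * (primeBelow i.1 : ℝ) ^ (-m : ℝ) := by
      rw [hN, Nat.cast_pow, Real.rpow_neg hp₀.le, Real.rpow_natCast]
      gcongr
    _ = 4 * (primeBelow i.1 : ℝ) ^ (-(3 / 4) * m : ℝ) := by
      rw [mul_assoc, ← Real.rpow_add hp₀]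
      ring_nf
    _ ≤ 4 * (primeBelow i.1 : ℝ) ^ (-(5 / 4) + -(1 / 8) * i.2 : ℝ) := by
      gcongr
      · linarith
      · linarith
    _ ≤ 4 * ((primeBelow i.1 : ℝ) ^ (-(5 / 4) : ℝ) * (2 ^ (-(1 / 8) : ℝ)) ^ i.2) := by
      rw [Real.rpow_add hp₀, Real.rpow_mul hp₀.le, Real.rpow_natCast]
      gcongr 4 * (_ * ?_ ^ _)
      exact Real.rpow_le_rpow_of_nonpos two_pos hp (by norm_num)

theorem summable_log_mul_inv_of_not_prime :
    Summable fun i : {i : HeightOneSpectrum (𝓞 K) × ℕ // ¬ (idealNorm (primePow i)).Prime} =>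
      Real.log (Ideal.absNorm i.1.1.asIdeal) * (idealNorm (primePow i.1) : ℝ)⁻¹ := by
  have hgeom : Summable fun k : ℕ => ((2 : ℝ) ^ (-(1 / 8) : ℝ)) ^ k :=
    summable_geometric_of_lt_one (by positivity)
      (Real.rpow_lt_one_of_one_lt_of_neg one_lt_two (by norm_num))
  have hprod : Summable fun i : HeightOneSpectrum (𝓞 K) × ℕ =>
      4 * ((primeBelow i.1 : ℝ) ^ (-(5 / 4) : ℝ) * (2 ^ (-(1 / 8) : ℝ)) ^ i.2) :=
    ((summable_primeBelow_rpow_neg (by norm_num)).mul_of_nonneg hgeom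
      (fun _ => by positivity) fun _ => by positivity).mul_left 4
  exact Summable.of_nonneg_of_le
    (fun i => mul_nonneg (Real.log_natCast_nonneg _) (by positivity))
    (fun i => log_mul_inv_le_primeBelow_rpow i.2) (hprod.comp_injective Subtype.val_injective)

end PrimeIdeals

section Nonvanishing

open NumberField IsDedekindDomain

theorem hasDerivAt_finsetProd_of_forall_eq_mul {ι 𝕜 : Type*} [NontriviallyNormedField 𝕜]
    {u : Finset ι} {f : ι → 𝕜 → 𝕜} {g : ι → 𝕜} {x : 𝕜}
    (hf : ∀ i ∈ u, HasDerivAt (f i) (g i * f i x) x) :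
    HasDerivAt (fun x => ∏ i ∈ u, f i x) ((∑ i ∈ u, g i) * ∏ i ∈ u, f i x) x := by
  classical
  refine (HasDerivAt.fun_finsetProd hf).congr_deriv ?_
  rw [Finset.sum_mul]
  refine Finset.sum_congr rfl fun i hi => ?_
  rw [smul_eq_mul, ← Finset.mul_prod_erase u (fun j => f j x) hi]
  ring

variable {K : Type*} [Field K] [NumberField K]

/-- The von Mangoldt function of the ideal class `C` as a function of the norm: its value at `n`
sums the weights `classVonMangoldt C` over the prime powers of norm `n`. -/
noncomputable def classVonMangoldtCoeff (C : ClassGroup (𝓞 K)) (n : ℕ) : ℝ :=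
  ∑' i : {i : HeightOneSpectrum (𝓞 K) × ℕ // idealNorm (primePow i) = n}, classVonMangoldt C i

theorem classVonMangoldt_nonneg (C : ClassGroup (𝓞 K)) : 0 ≤ classVonMangoldt C := fun i => by
  rw [classVonMangoldt]
  split_ifs
  · exact mul_nonneg (Nat.cast_nonneg _) (Real.log_natCast_nonneg _)
  · exact le_rfl

theorem classVonMangoldtCoeff_nonneg (C : ClassGroup (𝓞 K)) : 0 ≤ classVonMangoldtCoeff C :=
  fun _ => tsum_nonneg fun i => classVonMangoldt_nonneg C i

theorem ofReal_classVonMangoldtCoeff (C : ClassGroup (𝓞 K)) :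
    (fun n => (classVonMangoldtCoeff C n : ℂ)) =
      fiberCoeff (fun i => idealNorm (primePow i)) fun i => (classVonMangoldt C i : ℂ) :=
  funext fun _ => Complex.ofReal_tsum _

theorem LSeries_classVonMangoldtCoeff (C : ClassGroup (𝓞 K)) {s : ℂ} (hs : 1 < s.re) :
    LSeries (fun n => (classVonMangoldtCoeff C n : ℂ)) s =
      ∑ ψ : AddChar (Additive (ClassGroup (𝓞 K))) ℂ,
        ψ (-Additive.ofMul C) * idealLogSeries (classChar ψ) s := by
  rw [ofReal_classVonMangoldtCoeff]
  exact (hasSum_term_fiberCoeff (fun _ => idealNorm_ne_zero _)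
    (hasSum_classVonMangoldt_mul_cpow C hs)).tsum_eq

theorem abscissaOfAbsConv_classVonMangoldtCoeff_le (C : ClassGroup (𝓞 K)) :
    LSeries.abscissaOfAbsConv (fun n => (classVonMangoldtCoeff C n : ℂ)) ≤ 1 := by
  rw [ofReal_classVonMangoldtCoeff]
  exact_mod_cast abscissaOfAbsConv_fiberCoeff_le (fun _ => idealNorm_ne_zero _) (x := 1)
    fun σ hσ => (hasSum_classVonMangoldt_mul_cpow C (s := σ) hσ).summable

theorem log_absNorm_pow_card_le_classVonMangoldtCoeff_one (P : HeightOneSpectrum (𝓞 K)) :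
    Real.log ((Ideal.absNorm P.asIdeal ^ Fintype.card (ClassGroup (𝓞 K)) : ℕ) : ℝ) ≤
      classVonMangoldtCoeff (1 : ClassGroup (𝓞 K))
        (Ideal.absNorm P.asIdeal ^ Fintype.card (ClassGroup (𝓞 K))) := by
  set n := Ideal.absNorm P.asIdeal ^ Fintype.card (ClassGroup (𝓞 K))
  have hcard : Fintype.card (ClassGroup (𝓞 K)) - 1 + 1 = Fintype.card (ClassGroup (𝓞 K)) :=
    Nat.sub_add_cancel Fintype.card_pos
  let i : HeightOneSpectrum (𝓞 K) × ℕ := (P, Fintype.card (ClassGroup (𝓞 K)) - 1)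
  have hi : idealNorm (primePow i) = n := by rw [idealNorm_primePow, hcard]
  have hclass : ClassGroup.mk0 (primePow i) = 1 := by
    have hpow : primePow i = ⟨P.asIdeal, mem_nonZeroDivisors_of_ne_zero P.ne_bot⟩ ^
        Fintype.card (ClassGroup (𝓞 K)) := Subtype.ext (congrArg (P.asIdeal ^ ·) hcard)
    rw [hpow, map_pow, pow_card_eq_one]
  have : Finite {i : HeightOneSpectrum (𝓞 K) × ℕ // idealNorm (primePow i) = n} :=
    ((finite_setOf_idealNorm_le n).preimage primePow_injective.injOn).subset
      (fun j (hj : _ = n) => hj.le) |>.to_subtype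
  calc Real.log (n : ℝ)
    _ = classVonMangoldt 1 i := by rw [classVonMangoldt, if_pos hclass, Nat.cast_pow, Real.log_pow]
    _ ≤ classVonMangoldtCoeff 1 n :=
      Summable.of_finite.le_tsum (⟨i, hi⟩ : {i // idealNorm (primePow i) = n}) fun j _ =>
        classVonMangoldt_nonneg 1 j.1

theorem hasDerivAt_prod_idealLFunction_classChar {s : ℂ} (hs : 1 < s.re) :
    HasDerivAt (fun s => ∏ ψ : AddChar (Additive (ClassGroup (𝓞 K))) ℂ,
        idealLFunction (classChar ψ) s)
      (-(LSeries (fun n => (classVonMangoldtCoeff (1 : ClassGroup (𝓞 K)) n : ℂ)) s *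
        ∏ ψ : AddChar (Additive (ClassGroup (𝓞 K))) ℂ, idealLFunction (classChar ψ) s)) s := by
  have hderiv (ψ : AddChar (Additive (ClassGroup (𝓞 K))) ℂ) :=
    (hasDerivAt_idealLFunction (norm_classChar_le ψ) hs).congr_deriv (neg_mul _ _).symm
  refine (hasDerivAt_finsetProd_of_forall_eq_mul fun ψ _ => hderiv ψ).congr_deriv ?_
  simp only [LSeries_classVonMangoldtCoeff 1 hs, ofMul_one, neg_zero, AddChar.map_zero_eq_one,
    one_mul, Finset.sum_neg_distrib, neg_mul]

theorem not_differentiableOn_of_eq_prod_idealLFunction {σ : ℝ} (hσ : 1 < σ)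
    (hL : ∀ ψ : AddChar (Additive (ClassGroup (𝓞 K))) ℂ, idealLFunction (classChar ψ) σ ≠ 0)
    {D : ℂ → ℂ} (hDL : ∀ᶠ s in 𝓝 (σ : ℂ), D s =
      ∏ ψ : AddChar (Additive (ClassGroup (𝓞 K))) ℂ, idealLFunction (classChar ψ) s) :
    ¬ DifferentiableOn ℂ D (Metric.ball (σ : ℂ) (σ + 3 / 4)) := by
  intro hD
  have hre : ∀ᶠ s in 𝓝 (σ : ℂ), 1 < s.re :=
    (isOpen_lt continuous_const Complex.continuous_re).mem_nhds hσ
  have hderiv : ∀ᶠ s in 𝓝 (σ : ℂ), HasDerivAt D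
      (-(LSeries (fun n => (classVonMangoldtCoeff (1 : ClassGroup (𝓞 K)) n : ℂ)) s * D s)) s := by
    filter_upwards [hre, hDL.eventually_nhds] with s hs hDs
    rw [hDs.self_of_nhds]
    exact (hasDerivAt_prod_idealLFunction_classChar hs).congr_of_eventuallyEq hDs
  obtain ⟨M, hM⟩ := exists_forall_div_log_mul_le (x := -(1 / 2))
    (classVonMangoldtCoeff_nonneg (1 : ClassGroup (𝓞 K)))
    ((abscissaOfAbsConv_classVonMangoldtCoeff_le 1).trans_lt (by exact_mod_cast hσ)) hD
    (hDL.self_of_nhds ▸ Finset.prod_ne_zero_iff.2 fun ψ _ => hL ψ) hderiv (by linarith)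
    (by linarith)
  obtain ⟨m, hm⟩ := exists_nat_gt ((M + 1) ^ 2)
  obtain ⟨P, hP⟩ := exists_le_absNorm_asIdeal (K := K) (m + 2)
  set n := Ideal.absNorm P.asIdeal ^ Fintype.card (ClassGroup (𝓞 K))
  have hmn : m + 2 ≤ n := hP.trans (Nat.le_self_pow Fintype.card_ne_zero _)
  have hn₁ : (1 : ℝ) < n := by exact_mod_cast (by lia : 1 < n)
  have hratio : 1 ≤ classVonMangoldtCoeff (1 : ClassGroup (𝓞 K)) n / Real.log n :=
    (one_le_div (Real.log_pos hn₁)).2 (log_absNorm_pow_card_le_classVonMangoldtCoeff_one P)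
  have hsmall : (n : ℝ) ^ (-σ) ≤ 1 := Real.rpow_le_one_of_one_le_of_nonpos hn₁.le (by linarith)
  have hlarge : M + 1 < √n := Real.lt_sqrt_of_sq_lt (hm.trans_le (by exact_mod_cast (by lia)))
  rw [Real.sqrt_eq_rpow, ← neg_neg (1 / 2 : ℝ)] at hlarge
  have hbound := hM n (by lia)
  have hpos : 0 ≤ (n : ℝ) ^ (- -(1 / 2 : ℝ)) - (n : ℝ) ^ (-σ) :=
    sub_nonneg.2 (Real.rpow_le_rpow_of_exponent_le hn₁.le (by linarith))
  linarith [le_mul_of_one_le_left hpos hratio]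

open scoped Classical in
theorem exists_differentiableOn_eq_prod_idealLFunction {U : Set ℂ} (hU : IsOpen U) (h1 : 1 ∈ U)
    {A : AddChar (Additive (ClassGroup (𝓞 K))) ℂ → ℂ → ℂ}
    (hA : ∀ ψ, DifferentiableOn ℂ (A ψ) U)
    (hAL : ∀ ψ, ∀ s ∈ U, 1 < s.re →
      A ψ s = (if ψ = 0 then s - 1 else 1) * idealLFunction (classChar ψ) s)
    {ψ : AddChar (Additive (ClassGroup (𝓞 K))) ℂ} (hψ : A ψ 1 = 0) :
    ∃ D : ℂ → ℂ, DifferentiableOn ℂ D U ∧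
      ∀ s ∈ U, 1 < s.re → D s =
        ∏ ψ : AddChar (Additive (ClassGroup (𝓞 K))) ℂ, idealLFunction (classChar ψ) s := by
  refine ⟨dslope (fun s => ∏ ψ, A ψ s) 1, ?_, fun s hs hs1 => ?_⟩
  · exact (Complex.differentiableOn_dslope (hU.mem_nhds h1)).2
      (DifferentiableOn.fun_finsetProd fun ψ _ => hA ψ)
  · have hne : s ≠ 1 := by
      rintro rfl
      exact lt_irrefl _ hs1
    have hzero : ∏ φ, A φ 1 = 0 := Finset.prod_eq_zero (Finset.mem_univ ψ) hψ
    rw [dslope_of_ne _ hne, slope_def_field, hzero, sub_zero,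
      Finset.prod_congr rfl fun ψ _ => hAL ψ s hs hs1, Finset.prod_mul_distrib,
      Finset.prod_ite_eq' Finset.univ 0, if_pos (Finset.mem_univ _),
      mul_div_cancel_left₀ _ (sub_ne_zero.2 hne)]

open scoped Classical in
theorem exists_analyticAt_one_eq_mul_idealLFunction
    (ψ : AddChar (Additive (ClassGroup (𝓞 K))) ℂ) :
    ∃ A : ℂ → ℂ, AnalyticAt ℂ A 1 ∧ A 1 ≠ 0 ∧ ∀ᶠ s in 𝓝 1, 1 < s.re →
      A s = (if ψ = 0 then s - 1 else 1) * idealLFunction (classChar ψ) s := by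
  have hL (φ : AddChar (Additive (ClassGroup (𝓞 K))) ℂ) :
      ∀ᶠ σ : ℝ in atTop, idealLFunction (classChar φ) σ ≠ 0 :=
    (tendsto_idealLFunction_atTop (norm_classChar_le φ)).eventually_ne one_ne_zero
  obtain ⟨σ, hσ, hσL⟩ := ((eventually_gt_atTop 1).and (eventually_all.2 hL)).exists
  choose A hA hAL using exists_idealLFunction_continuation (K := K) (σ + 1)
  set U := Metric.ball (σ : ℂ) (σ + 3 / 4)
  have hUB : U ⊆ {s : ℂ | -1 < s.re ∧ |s.im| ≤ σ + 1} := fun s hs => by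
    have hdist : ‖s - σ‖ < σ + 3 / 4 := mem_ball_iff_norm.1 hs
    have hre := (Complex.abs_re_le_norm (s - σ)).trans_lt hdist
    have him := (Complex.abs_im_le_norm (s - σ)).trans_lt hdist
    rw [Complex.sub_re, Complex.ofReal_re, abs_lt] at hre
    rw [Complex.sub_im, Complex.ofReal_im, sub_zero] at him
    exact ⟨by linarith, by linarith⟩
  have hU : U ∈ 𝓝 1 := Metric.isOpen_ball.mem_nhds <| by
    rw [mem_ball_iff_norm, ← Complex.ofReal_one, ← Complex.ofReal_sub, Complex.norm_real,
      Real.norm_eq_abs, abs_lt]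
    constructor <;> linarith
  have hAU (φ) : DifferentiableOn ℂ (A φ) U := (hA φ).mono hUB
  have hAL' (φ) (s) (hs : s ∈ U) (hs1 : 1 < s.re) := hAL φ s hs1 (hUB hs).2
  refine ⟨A ψ, (hAU ψ).analyticAt hU, fun hψ => ?_, mem_of_superset hU (hAL' ψ)⟩
  obtain ⟨D, hD, hDL⟩ := exists_differentiableOn_eq_prod_idealLFunction Metric.isOpen_ball
    (mem_of_mem_nhds hU) hAU hAL' hψ
  refine not_differentiableOn_of_eq_prod_idealLFunction hσ hσL ?_ hD
  filter_upwards [Metric.ball_mem_nhds (σ : ℂ) (by linarith : 0 < σ + 3 / 4),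
    (isOpen_lt continuous_const Complex.continuous_re).mem_nhds hσ] with s hs hs1
  exact hDL s hs hs1

end Nonvanishing

section Density

open NumberField IsDedekindDomain

variable {K : Type*} [Field K] [NumberField K]

open scoped Classical in
theorem tendsto_sub_one_mul_idealLogSeries (ψ : AddChar (Additive (ClassGroup (𝓞 K))) ℂ) :
    Tendsto (fun σ : ℝ => ((σ : ℂ) - 1) * idealLogSeries (classChar ψ) σ) (𝓝[>] 1)
      (𝓝 (if ψ = 0 then 1 else 0)) := by
  obtain ⟨A, hA, hA1, hAL⟩ := exists_analyticAt_one_eq_mul_idealLFunction ψ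
  have hofReal : Tendsto (fun σ : ℝ => (σ : ℂ)) (𝓝[>] 1) (𝓝 1) :=
    Complex.continuous_ofReal.continuousAt.tendsto.mono_left nhdsWithin_le_nhds
  have hlogDeriv : ContinuousAt (logDeriv A) 1 := hA.deriv.continuousAt.div hA.continuousAt hA1
  have hlim : Tendsto (fun s => (if ψ = 0 then 1 else 0) - (s - 1) * logDeriv A s) (𝓝 1)
      (𝓝 (if ψ = 0 then 1 else 0)) := by
    have hcont : ContinuousAt (fun s => (if ψ = 0 then 1 else 0) - (s - 1) * logDeriv A s) 1 := by
      fun_prop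
    simpa [ContinuousAt] using hcont
  refine (hlim.comp hofReal).congr' ?_
  filter_upwards [hofReal.eventually hAL.eventually_nhds,
    hofReal.eventually (hA.continuousAt.eventually_ne hA1), self_mem_nhdsWithin]
    with σ hσL hσA (hσ : 1 < σ)
  have hre : ∀ᶠ s in 𝓝 (σ : ℂ), 1 < s.re :=
    (isOpen_lt continuous_const Complex.continuous_re).mem_nhds hσ
  have hAσ := hσL.self_of_nhds hσ
  have hfactor :
      HasDerivAt (fun s : ℂ => if ψ = 0 then s - 1 else 1) (if ψ = 0 then 1 else 0) σ := by
    split_ifs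
    · exact (hasDerivAt_id _).sub_const 1
    · exact hasDerivAt_const _ _
  have hproduct := hfactor.mul (hasDerivAt_idealLFunction (norm_classChar_le ψ) hσ)
  have hderiv := (hproduct.congr_of_eventuallyEq
    ((hσL.and hre).mono fun s hs => hs.1 hs.2)).deriv
  rw [Function.comp_apply, logDeriv_apply, hderiv]
  rw [hAσ] at hσA ⊢
  have hL := right_ne_zero_of_mul hσA
  have hσ₁ : (σ : ℂ) - 1 ≠ 0 := sub_ne_zero.2 (by exact_mod_cast hσ.ne')
  split_ifs <;> field_simp <;> ring

theorem tendsto_sub_one_mul_tsum_classVonMangoldt (C : ClassGroup (𝓞 K)) :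
    Tendsto (fun σ : ℝ => (σ - 1) *
      ∑' i, classVonMangoldt C i * (idealNorm (primePow i) : ℝ) ^ (-σ)) (𝓝[>] 1) (𝓝 1) := by
  classical
  have hlim : Tendsto (fun σ : ℝ => ∑ ψ : AddChar (Additive (ClassGroup (𝓞 K))) ℂ,
      ψ (-Additive.ofMul C) * (((σ : ℂ) - 1) * idealLogSeries (classChar ψ) σ)) (𝓝[>] 1)
      (𝓝 (∑ ψ : AddChar (Additive (ClassGroup (𝓞 K))) ℂ,
        ψ (-Additive.ofMul C) * if ψ = 0 then 1 else 0)) :=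
    tendsto_finsetSum _ fun ψ _ => (tendsto_sub_one_mul_idealLogSeries ψ).const_mul _
  simp only [mul_ite, mul_one, mul_zero, Finset.sum_ite_eq', Finset.mem_univ, if_true,
    AddChar.zero_apply] at hlim
  refine ((Complex.continuous_re.tendsto 1).comp hlim).congr' ?_
  filter_upwards [self_mem_nhdsWithin] with σ (hσ : 1 < σ)
  have hsum := (hasSum_classVonMangoldt_mul_cpow C (s := σ) hσ).tsum_eq
  simp only [mul_left_comm _ ((σ : ℂ) - 1), ← Finset.mul_sum, ← hsum, Function.comp_apply]
  rw [← Complex.ofReal_re ((σ - 1) * _)]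
  push_cast [Complex.ofReal_cpow (Nat.cast_nonneg _)]
  rfl

theorem summable_classVonMangoldt_mul_inv {C : ClassGroup (𝓞 K)}
    (hC : {J : (Ideal (𝓞 K))⁰ | ClassGroup.mk0 J = C ∧ (idealNorm J).Prime}.Finite) :
    Summable fun i => classVonMangoldt C i * (idealNorm (primePow i) : ℝ)⁻¹ := by
  refine (summable_subtype_and_compl
    (s := {i : HeightOneSpectrum (𝓞 K) × ℕ | (idealNorm (primePow i)).Prime})).1 ⟨?_, ?_⟩
  · refine summable_of_hasFiniteSupport ?_
    refine ((hC.preimage primePow_injective.injOn).preimage Subtype.val_injective.injOn).subset ?_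
    intro i hi
    refine ⟨?_, i.2⟩
    by_contra hne
    exact hi (mul_eq_zero_of_left (if_neg hne) _)
  · refine Summable.of_nonneg_of_le
      (fun i => mul_nonneg (classVonMangoldt_nonneg C i.1) (by positivity)) (fun i => ?_)
      (summable_log_mul_inv_of_not_prime.mul_left (Fintype.card (ClassGroup (𝓞 K)) : ℝ))
    rw [← mul_assoc]
    gcongr
    rw [classVonMangoldt]
    split_ifs
    · exact le_rfl
    · exact mul_nonneg (Nat.cast_nonneg _) (Real.log_natCast_nonneg _)

theorem tsum_classVonMangoldt_mul_rpow_neg_le {C : ClassGroup (𝓞 K)}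
    (hC : Summable fun i => classVonMangoldt C i * (idealNorm (primePow i) : ℝ)⁻¹) {σ : ℝ}
    (hσ : 1 ≤ σ) :
    ∑' i, classVonMangoldt C i * (idealNorm (primePow i) : ℝ) ^ (-σ) ≤
      ∑' i, classVonMangoldt C i * (idealNorm (primePow i) : ℝ)⁻¹ := by
  have hle (i) : classVonMangoldt C i * (idealNorm (primePow i) : ℝ) ^ (-σ) ≤
      classVonMangoldt C i * (idealNorm (primePow i) : ℝ)⁻¹ := by
    have hN : (1 : ℝ) ≤ idealNorm (primePow i) :=
      Nat.one_le_cast.2 (Nat.one_le_iff_ne_zero.2 (idealNorm_ne_zero _))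
    rw [← Real.rpow_neg_one]
    gcongr
    exact classVonMangoldt_nonneg C i
  have hnonneg (i) : 0 ≤ classVonMangoldt C i * (idealNorm (primePow i) : ℝ) ^ (-σ) :=
    mul_nonneg (classVonMangoldt_nonneg C i) (by positivity)
  exact (hC.of_nonneg_of_le hnonneg hle).tsum_le_tsum hle hC

end Density

theorem infinite_prime_norm_ideals_in_class_general
    (K : Type*) [Field K] [NumberField K]
    (I : (Ideal (NumberField.RingOfIntegers K))⁰) :
    {J : (Ideal (NumberField.RingOfIntegers K))⁰ |
      ClassGroup.mk0 J = ClassGroup.mk0 I ∧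
        (Ideal.absNorm (J : Ideal (NumberField.RingOfIntegers K))).Prime}.Infinite := by
  intro hfin
  have hsum := summable_classVonMangoldt_mul_inv hfin
  have hlimit := tendsto_sub_one_mul_tsum_classVonMangoldt (ClassGroup.mk0 I)
  set M := ∑' i, classVonMangoldt (ClassGroup.mk0 I) i * (idealNorm (primePow i) : ℝ)⁻¹
  have hzero : Tendsto (fun σ : ℝ => (σ - 1) * M) (𝓝[>] 1) (𝓝 0) := by
    have hcont : Continuous fun σ : ℝ => (σ - 1) * M := by fun_prop
    simpa using (hcont.tendsto 1).mono_left nhdsWithin_le_nhds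
  refine zero_lt_one.not_ge (le_of_tendsto_of_tendsto hlimit hzero ?_)
  filter_upwards [self_mem_nhdsWithin] with σ (hσ : 1 < σ)
  exact mul_le_mul_of_nonneg_left (tsum_classVonMangoldt_mul_rpow_neg_le hsum hσ.le)
    (sub_nonneg.2 hσ.le)

/-- In a number field that is Galois over ℚ, every ideal class contains infinitely
many integral ideals of prime absolute norm. -/
theorem infinite_prime_norm_ideals_in_class
    (K : Type*) [Field K] [NumberField K] [IsGalois ℚ K]
    (I : (Ideal (NumberField.RingOfIntegers K))⁰) :
    {J : (Ideal (NumberField.RingOfIntegers K))⁰ |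
      ClassGroup.mk0 J = ClassGroup.mk0 I ∧
        (Ideal.absNorm (J : Ideal (NumberField.RingOfIntegers K))).Prime}.Infinite := by
  exact infinite_prime_norm_ideals_in_class_general K I
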